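/- arXiv:1511.06808 — 2 statements merged into one kernel-verified Lean document; each statement's English description precedes it below -/
import Mathlib

section
/- Let D be a hereditarily convex good drawing of K_n in the sphere, with chosen convex discs Δ_T for each 3-cycle T. Then for every 3-cycle T and every edge uv of T, there exists a 3-cycle T′ containing the edge uv such that Δ_{T′} ⊆ Δ_T and the interior of Δ_{T′} is an empty triangle of D. -/
open Set Topology

noncomputable section

abbrev Plane : Type := EuclideanSpace ℝ (Fin 2)

abbrev SpherePt : Type := ↥(Metric.sphere (0 : EuclideanSpace ℝ (Fin 3)) 1)

/-- `γ` crosses the curve `σ` at `p`: `p` lies on both sets, and in every neighbourhood of `p`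
there is a smaller neighbourhood `V` such that `V \ σ` splits into two connected "sides",
both of which meet `γ`. -/
def CrossesAt {X : Type*} [TopologicalSpace X] (σ γ : Set X) (p : X) : Prop :=
  p ∈ σ ∧ p ∈ γ ∧ ∀ U ∈ nhds p, ∃ V ∈ nhds p, V ⊆ U ∧
    ∃ C₁ C₂ : Set X, V \ σ = C₁ ∪ C₂ ∧ Disjoint C₁ C₂ ∧
      IsPreconnected C₁ ∧ IsPreconnected C₂ ∧ (γ ∩ C₁).Nonempty ∧ (γ ∩ C₂).Nonempty

/-- `Δ` is one of the closed regions ("closed discs") bounded by the curve `C`: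
it is the union of `C` with a connected component of the complement of `C`. -/
def IsClosedSide {X : Type*} [TopologicalSpace X] (C Δ : Set X) : Prop :=
  ∃ q, q ∉ C ∧ Δ = connectedComponentIn Cᶜ q ∪ C

/-- `Δ` is one of the open regions ("open discs") bounded by the curve `C`. -/
def IsOpenSide {X : Type*} [TopologicalSpace X] (C Δ : Set X) : Prop :=
  ∃ q, q ∉ C ∧ Δ = connectedComponentIn Cᶜ q

/-- `G` is a face (a connected component of the complement) of the point set `A`. -/
def IsFaceOf {X : Type*} [TopologicalSpace X] (A G : Set X) : Prop :=
  ∃ q, q ∉ A ∧ G = connectedComponentIn Aᶜ q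

/-- A good drawing of the complete graph `K_n` in the space `X`. -/
structure GoodDrawing (n : ℕ) (X : Type*) [TopologicalSpace X] where
  vtx : Fin n → X
  arc : Fin n → Fin n → Set X
  vtx_inj : Function.Injective vtx
  arc_symm : ∀ u v, arc u v = arc v u
  isArc : ∀ u v, u ≠ v → ∃ f : ℝ → X, ContinuousOn f (Set.Icc 0 1) ∧
    Set.InjOn f (Set.Icc 0 1) ∧ f 0 = vtx u ∧ f 1 = vtx v ∧ arc u v = f '' Set.Icc 0 1
  vtx_not_mem : ∀ u v w, u ≠ v → w ≠ u → w ≠ v → vtx w ∉ arc u v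
  adj_arcs : ∀ u v w, u ≠ v → u ≠ w → v ≠ w → arc u v ∩ arc u w = {vtx u}
  indep_arcs : ∀ u v x y : Fin n, u ≠ v → x ≠ y → u ≠ x → u ≠ y → v ≠ x → v ≠ y →
    (arc u v ∩ arc x y).Subsingleton ∧
      ∀ p ∈ arc u v ∩ arc x y,
        CrossesAt (arc u v) (arc x y) p ∧ CrossesAt (arc x y) (arc u v) p
  no_triple_pt : ∀ p : X, p ∉ Set.range vtx → ∀ u v x y s t : Fin n,
    u ≠ v → x ≠ y → s ≠ t →
    ({u, v} : Finset (Fin n)) ≠ {x, y} → ({u, v} : Finset (Fin n)) ≠ {s, t} →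
    ({x, y} : Finset (Fin n)) ≠ {s, t} →
    ¬(p ∈ arc u v ∧ p ∈ arc x y ∧ p ∈ arc s t)

namespace GoodDrawing

variable {n : ℕ} {X : Type*} [TopologicalSpace X]

/-- The point set of the subdrawing induced by the set `W` of vertices. -/
def image (D : GoodDrawing n X) (W : Set (Fin n)) : Set X :=
  (D.vtx '' W) ∪ ⋃ u ∈ W, ⋃ v ∈ W, ⋃ (_ : u ≠ v), D.arc u v

/-- The simple closed curve that is the drawing of the 3-cycle on `a`, `b`, `c`. -/
def tri (D : GoodDrawing n X) (a b c : Fin n) : Set X :=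
  D.arc a b ∪ D.arc b c ∪ D.arc a c

/-- `Δ` is convex: it contains the arc between any two vertex points it contains. -/
def ConvexDisc (D : GoodDrawing n X) (Δ : Set X) : Prop :=
  ∀ x y : Fin n, x ≠ y → D.vtx x ∈ Δ → D.vtx y ∈ Δ → D.arc x y ⊆ Δ

/-- `F` is a face of the drawing `D`. -/
def IsFace (D : GoodDrawing n X) (F : Set X) : Prop :=
  IsFaceOf (D.image Set.univ) F

/-- `D` is face-convex with outer face `F`. -/
def FaceConvex (D : GoodDrawing n X) (F : Set X) : Prop :=
  D.IsFace F ∧ ∀ a b c : Fin n, a ≠ b → a ≠ c → b ≠ c →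
    ∀ Δ : Set X, IsClosedSide (D.tri a b c) Δ → ¬F ⊆ Δ → D.ConvexDisc Δ

/-- `D` is a convex drawing: every 3-cycle has at least one convex closed side. -/
def IsConvex (D : GoodDrawing n X) : Prop :=
  ∀ a b c : Fin n, a ≠ b → a ≠ c → b ≠ c →
    ∃ Δ : Set X, IsClosedSide (D.tri a b c) Δ ∧ D.ConvexDisc Δ

/-- The closed curve drawn by the cycle `c 0, c 1, …, c (m-1), c 0` of `K_n`. -/
def cycCurve (D : GoodDrawing n X) {m : ℕ} [NeZero m] (c : Fin m → Fin n) : Set X :=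
  ⋃ i : Fin m, D.arc (c i) (c (i + 1))

/-- `Δ` is the convex hull `Δ_W` of the vertex set `W` (relative to the outer face `F`):
the face of the subdrawing `D[W]` containing `F` is bounded by a cycle `C_W` on vertices
of `W`, and `Δ` is the closed disc bounded by `D[C_W]` disjoint from `F`. -/
def IsHull (D : GoodDrawing n X) (F : Set X) (W : Set (Fin n)) (Δ : Set X) : Prop :=
  ∃ (m : ℕ) (c : Fin (m + 3) → Fin n), Function.Injective c ∧ (∀ i, c i ∈ W) ∧
    (∃ G : Set X, IsFaceOf (D.image W) G ∧ F ⊆ G ∧ frontier G = D.cycCurve c) ∧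
    IsClosedSide (D.cycCurve c) Δ ∧ Disjoint F Δ

/-- The data of the two local sides `C 0`, `C 1` of the arc `D[uv]` at an interior
point `p` of the arc. -/
def LocalSides (D : GoodDrawing n X) (u v : Fin n) (p : X) (C : Fin 2 → Set X) : Prop :=
  p ∈ D.arc u v ∧ p ≠ D.vtx u ∧ p ≠ D.vtx v ∧
    ∃ V ∈ nhds p, C 0 ∪ C 1 = V \ D.arc u v ∧ Disjoint (C 0) (C 1) ∧
      IsPreconnected (C 0) ∧ IsPreconnected (C 1) ∧ (C 0).Nonempty ∧ (C 1).Nonempty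

/-- Relative to the outer face `F` and the local sides `C` of `D[uv]` at `p`, the
vertex `w` is on side `i` of `uv`: the closed disc bounded by `D[{u,v,w}]` not
containing `F` lies locally on side `i` of `D[uv]`. -/
def OnSide (D : GoodDrawing n X) (F : Set X) (u v : Fin n) (p : X) (C : Fin 2 → Set X)
    (i : Fin 2) (w : Fin n) : Prop :=
  w ≠ u ∧ w ≠ v ∧ ∃ Δ : Set X, IsClosedSide (D.tri u v w) Δ ∧ ¬F ⊆ Δ ∧
    ∃ V ∈ nhds p, C i ∩ V ⊆ Δ

/-- `Side(uv, i)`: the set consisting of `u`, `v` and all vertices on side `i` of `uv`. -/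
def SideSet (D : GoodDrawing n X) (F : Set X) (u v : Fin n) (p : X) (C : Fin 2 → Set X)
    (i : Fin 2) : Set (Fin n) :=
  {u, v} ∪ {w : Fin n | D.OnSide F u v p C i w}

/-- The edge-arcs `D[uv]` and `D[xy]` cross: they share a non-vertex point. -/
def Crosses (D : GoodDrawing n X) (u v x y : Fin n) : Prop :=
  ∃ p : X, p ∈ D.arc u v ∩ D.arc x y ∧ p ∉ Set.range D.vtx

/-- The set of empty triangles of `D`: pairs of a 3-set of vertices together with an
open disc bounded by the corresponding triangle containing no vertex point. -/
def emptyTriangles (D : GoodDrawing n X) : Set (Finset (Fin n) × Set X) :=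
  {T | ∃ a b c : Fin n, a ≠ b ∧ a ≠ c ∧ b ≠ c ∧ T.1 = {a, b, c} ∧
    IsOpenSide (D.tri a b c) T.2 ∧ ∀ i, D.vtx i ∉ T.2}

end GoodDrawing

/-- A pseudoline in the plane. -/
def IsPseudoline (σ : Set Plane) : Prop :=
  IsClosed σ ∧ Nonempty (↥σ ≃ₜ ℝ) ∧ ¬IsPreconnected σᶜ

/-- An arrangement of pseudolines: any two distinct members meet in exactly one
point, at which they cross. -/
def IsArrangement (A : Finset (Set Plane)) : Prop :=
  (∀ σ ∈ A, IsPseudoline σ) ∧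
    ∀ σ ∈ A, ∀ τ ∈ A, σ ≠ τ →
      ∃ p : Plane, σ ∩ τ = {p} ∧ CrossesAt σ τ p ∧ CrossesAt τ σ p

/-- A planar good drawing of `K_n` is pseudolinear if some arrangement of pseudolines
contains, for each edge, a distinct pseudoline containing that edge-arc. -/
def GoodDrawing.Pseudolinear {n : ℕ} (D : GoodDrawing n Plane) : Prop :=
  ∃ (A : Finset (Set Plane)) (L : Fin n → Fin n → Set Plane), IsArrangement A ∧
    (∀ u v, u ≠ v → L u v ∈ A ∧ D.arc u v ⊆ L u v) ∧
    (∀ u v, L u v = L v u) ∧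
    ∀ u v x y : Fin n, u ≠ v → x ≠ y →
      ({u, v} : Finset (Fin n)) ≠ {x, y} → L u v ≠ L x y

/-!
Fix the edge `uv` and, among the vertices `w` for which the disc of `uvw` lies in that of `abc`,
choose one whose disc is minimal. Suppose that a vertex `x` lies in the interior of this disc. By
convexity the 3-cycle `uvx` is drawn inside it, so by heredity the disc of `uvx` is contained in it.
The inclusion is proper: `w`, being on the boundary of the larger disc, is not in the interior of
the smaller one, and it is not on the curve `uvx` either. This contradicts minimality.

The topological input is that the interior of a closed side of a Jordan curve is the corresponding
open side. It follows from two facts about the sphere: a Jordan curve separates it, but an arc does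
not. Both are proved with continuous logarithms of `z - p` in place of winding numbers.
-/

/-! ### Continuous logarithms -/

section Logarithm

variable {X Y : Type*} [TopologicalSpace X] [TopologicalSpace Y]

/-- The complex-valued function `f` has a continuous logarithm on `s`. This is the substitute for
the vanishing of the winding number about `0` of `f` along all loops in `s`. -/
def HasLogOn (f : X → ℂ) (s : Set X) : Prop :=
  ∃ L : X → ℂ, ContinuousOn L s ∧ ∀ x ∈ s, Complex.exp (L x) = f x

theorem hasLogOn_const (c : ℂ) (hc : c ≠ 0) (s : Set X) : HasLogOn (fun _ ↦ c) s :=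
  ⟨fun _ ↦ Complex.log c, continuousOn_const, fun _ _ ↦ Complex.exp_log hc⟩

namespace HasLogOn

variable {f g : X → ℂ} {s t : Set X}

theorem mul (hf : HasLogOn f s) (hg : HasLogOn g s) : HasLogOn (fun x ↦ f x * g x) s := by
  obtain ⟨L, hL, hLf⟩ := hf
  obtain ⟨M, hM, hMg⟩ := hg
  exact ⟨L + M, hL.add hM, fun x hx ↦ by rw [Pi.add_apply, Complex.exp_add, hLf x hx, hMg x hx]⟩

theorem congr (hf : HasLogOn f s) (h : EqOn f g s) : HasLogOn g s :=
  hf.imp fun _ hL ↦ ⟨hL.1, fun x hx ↦ (hL.2 x hx).trans (h hx)⟩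

theorem mono (hf : HasLogOn f s) (h : t ⊆ s) : HasLogOn f t :=
  hf.imp fun _ hL ↦ ⟨hL.1.mono h, fun x hx ↦ hL.2 x (h hx)⟩

theorem comp {t : Set Y} (hf : HasLogOn f s) {φ : Y → X} (hφ : ContinuousOn φ t)
    (hst : MapsTo φ t s) : HasLogOn (f ∘ φ) t :=
  let ⟨L, hL, hLf⟩ := hf
  ⟨L ∘ φ, hL.comp hφ hst, fun y hy ↦ hLf (φ y) (hst hy)⟩

theorem exists_restrict (hf : HasLogOn f s) :
    ∃ L : C(s, ℂ), ∀ x : s, Complex.exp (L x) = f x :=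
  let ⟨L, hL, hLf⟩ := hf
  ⟨⟨s.domRestrict L, hL.domRestrict⟩, fun x ↦ hLf x x.2⟩

end HasLogOn

theorem isLocallyInjective_complex_exp : IsLocallyInjective Complex.exp := fun z ↦
  let ⟨U, hU, hz, hinj⟩ := Complex.isCoveringMap_exp.isLocalHomeomorph.isLocallyInjective z
  ⟨U, hU, hz, fun _ ha _ hb h ↦ hinj ha hb (Subtype.ext h)⟩

theorem eq_of_isPreconnected_of_exp_eq {s : Set X} (hs : IsPreconnected s) {L : X → ℂ}
    (hL : ContinuousOn L s) {c : ℂ} (hc : ∀ x ∈ s, Complex.exp (L x) = c) {x y : X}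
    (hx : x ∈ s) (hy : y ∈ s) : L x = L y :=
  (T2Space.isSeparatedMap Complex.exp).constOn_of_comp isLocallyInjective_complex_exp hs hL
    (fun a ha b hb ↦ (hc a ha).trans (hc b hb).symm) hx hy

theorem HasLogOn.union {f : X → ℂ} {s t : Set X} (hs : IsOpen s) (ht : IsOpen t)
    (hst : IsPreconnected (s ∩ t)) (hfs : HasLogOn f s) (hft : HasLogOn f t) :
    HasLogOn f (s ∪ t) := by
  classical
  obtain ⟨L, hL, hLf⟩ := hfs
  obtain ⟨M, hM, hMf⟩ := hft
  have hexp : ∀ x ∈ s ∩ t, Complex.exp (L x - M x) = 1 := fun x hx ↦ by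
    rw [Complex.exp_sub, hLf x hx.1, hMf x hx.2, div_self (hLf x hx.1 ▸ Complex.exp_ne_zero _)]
  obtain ⟨k, hk, hLM⟩ : ∃ k, Complex.exp k = 1 ∧ ∀ x ∈ s ∩ t, L x = M x + k := by
    obtain hempty | ⟨y, hy⟩ := (s ∩ t).eq_empty_or_nonempty
    · exact ⟨0, Complex.exp_zero, by simp [hempty]⟩
    · refine ⟨L y - M y, hexp y hy, fun x hx ↦ sub_eq_iff_eq_add'.1 ?_⟩
      exact eq_of_isPreconnected_of_exp_eq hst
        ((hL.mono inter_subset_left).sub (hM.mono inter_subset_right)) hexp hx hy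
  have hNs : EqOn (s.piecewise L fun x ↦ M x + k) L s := s.piecewise_eqOn _ _
  have hNt : EqOn (s.piecewise L fun x ↦ M x + k) (fun x ↦ M x + k) t := fun x hx ↦ by
    by_cases hxs : x ∈ s
    · rw [piecewise_eq_of_mem _ _ _ hxs, hLM x ⟨hxs, hx⟩]
    · rw [piecewise_eq_of_notMem _ _ _ hxs]
  refine ⟨_, (hL.congr hNs).union_of_isOpen ((hM.add continuousOn_const).congr hNt) hs ht, ?_⟩
  rintro x (hx | hx)
  · rw [hNs hx, hLf x hx]
  · rw [hNt hx, Complex.exp_add, hk, mul_one, hMf x hx]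

theorem hasLogOn_iff_subtype {f : X → ℂ} {s : Set X} :
    HasLogOn f s ↔ HasLogOn (fun x : s ↦ f x) univ := by
  refine ⟨fun h ↦ h.comp continuous_subtype_val.continuousOn fun x _ ↦ x.2, fun ⟨L, hL, hLf⟩ ↦ ?_⟩
  have hext : ∀ x : s, Function.extend Subtype.val L 0 (x : X) = L x :=
    Subtype.val_injective.extend_apply L 0
  refine ⟨Function.extend Subtype.val L 0, ?_, fun x hx ↦ ?_⟩
  · rw [continuousOn_iff_continuous_domRestrict, ← continuousOn_univ]
    exact hL.congr fun x _ ↦ hext x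
  · exact (congrArg _ (hext ⟨x, hx⟩)).trans (hLf ⟨x, hx⟩ (mem_univ _))

theorem HasLogOn.of_homotopy {H : unitInterval × X → ℂ} (hH : Continuous H)
    (hne : ∀ p, H p ≠ 0) (h0 : HasLogOn (fun x ↦ H (0, x)) univ) :
    HasLogOn (fun x ↦ H (1, x)) univ := by
  obtain ⟨L, hL, hLH⟩ := h0
  have hlift := Complex.isCoveringMap_exp.liftHomotopy_lifts
    ⟨fun p ↦ (⟨H p, hne p⟩ : {z : ℂ // z ≠ 0}), by fun_prop⟩ ⟨L, continuousOn_univ.1 hL⟩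
    (fun x ↦ Subtype.ext (hLH x (mem_univ x)).symm)
  exact ⟨_, (ContinuousMap.continuous _).comp (Continuous.prodMk_right 1) |>.continuousOn,
    fun x _ ↦ congrArg Subtype.val (congrFun hlift (1, x))⟩

theorem hasLogOn_of_contractibleSpace {f : X → ℂ} {s : Set X} [ContractibleSpace s]
    (hf : ContinuousOn f s) (hne : ∀ x ∈ s, f x ≠ 0) : HasLogOn f s := by
  obtain ⟨x₀, ⟨F⟩⟩ := id_nullhomotopic s
  have hlog : HasLogOn (fun x ↦ f (F.symm (1, x))) univ :=
    .of_homotopy (H := fun p ↦ f (F.symm p)) (hf.comp_continuous (by fun_prop) fun p ↦ (F.symm p).2)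
      (fun p ↦ hne _ (F.symm p).2) (by simpa using hasLogOn_const _ (hne x₀ x₀.2) univ)
  rw [hasLogOn_iff_subtype]
  simpa using hlog

theorem not_hasLogOn_const_mul_circle (c : ℂ) : ¬ HasLogOn (fun w : Circle ↦ c * w) univ := by
  rintro ⟨L, hL, hLc⟩
  -- Along the universal cover of the circle the logarithm differs from `t * I` by a constant,
  -- so it is not `2 * π`-periodic.
  have hconst := eq_of_isPreconnected_of_exp_eq (X := ℝ) isPreconnected_univ (c := c)
    (L := fun t ↦ L (Circle.exp t) - t * Complex.I)
    ((continuousOn_univ.1 hL).comp Circle.exp.continuous |>.sub (by fun_prop) |>.continuousOn)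
    (fun t _ ↦ by simp [Complex.exp_sub, hLc])
    (mem_univ 0) (mem_univ (2 * Real.pi))
  simp [eq_comm (a := L 1), Real.pi_ne_zero] at hconst

end Logarithm

/-! ### Contractible closed sets do not separate the sphere -/

theorem not_hasLogOn_sub_frontier {U : Set ℂ} (hb : Bornology.IsBounded U)
    {p : ℂ} (hp : p ∈ U) : ¬ HasLogOn (fun z ↦ z - p) (frontier U) := by
  classical
  intro hlog
  obtain ⟨L, hL⟩ := hlog.exists_restrict
  obtain ⟨G, hG⟩ := ContinuousMap.exists_restrict_eq isClosed_frontier L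
  -- A logarithm on the frontier would allow `z - p` to be modified inside `U` so as to lose
  -- its zero, although its winding number on a large circle is `1`.
  let h : ℂ → ℂ := U.piecewise (fun z ↦ Complex.exp (G z)) fun z ↦ z - p
  have hcont : Continuous h := by
    refine continuous_piecewise (fun z hz ↦ ?_) (by fun_prop) (by fun_prop)
    rw [← hL ⟨z, hz⟩, ← hG, ContinuousMap.restrict_apply]
  have hne : ∀ z, h z ≠ 0 := fun z ↦ by
    by_cases hz : z ∈ U
    · simp [h, hz, Complex.exp_ne_zero]
    · simpa [h, hz, sub_eq_zero] using (ne_of_mem_of_not_mem hp hz).symm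
  obtain ⟨R, hR⟩ := hb.subset_closedBall p
  have houter : ∀ w : Circle, p + (|R| + 1 : ℝ) * w ∉ U := fun w hw ↦ by
    have hdist := mem_closedBall_iff_norm.1 (hR hw)
    rw [add_sub_cancel_left, norm_mul, Circle.norm_coe, mul_one, Complex.norm_real,
      Real.norm_of_nonneg (by positivity)] at hdist
    linarith [le_abs_self R]
  have hlogh : HasLogOn h univ :=
    haveI : ContractibleSpace (univ : Set ℂ) := (Homeomorph.Set.univ ℂ).contractibleSpace
    hasLogOn_of_contractibleSpace hcont.continuousOn fun z _ ↦ hne z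
  refine not_hasLogOn_const_mul_circle (|R| + 1 : ℝ) ?_
  refine (hlogh.comp (φ := fun w : Circle ↦ p + (|R| + 1 : ℝ) * w) (t := univ) (by fun_prop)
    (mapsTo_univ _ _)).congr fun w _ ↦ ?_
  simp only [Function.comp_apply, h, piecewise_eq_of_notMem _ _ _ (houter w), add_sub_cancel_left]

theorem subset_of_frontier_subset_of_contractibleSpace {U K : Set ℂ} [ContractibleSpace K]
    (hb : Bornology.IsBounded U) (hUK : frontier U ⊆ K) : U ⊆ K := by
  intro p hp
  by_contra hpK
  have hlog : HasLogOn (fun z ↦ z - p) K := hasLogOn_of_contractibleSpace (by fun_prop)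
    fun z hz ↦ sub_ne_zero.2 (ne_of_mem_of_not_mem hz hpK)
  exact not_hasLogOn_sub_frontier hb hp (hlog.mono hUK)

theorem exists_homeomorph_onePoint_sphere {V E : Type*} [NormedAddCommGroup V] [NormedSpace ℝ V]
    [FiniteDimensional ℝ V] [NormedAddCommGroup E] [InnerProductSpace ℝ E] [FiniteDimensional ℝ E]
    (hdim : Module.finrank ℝ E = Module.finrank ℝ V + 1) (q : Metric.sphere (0 : E) 1) :
    ∃ e : OnePoint V ≃ₜ Metric.sphere (0 : E) 1, e OnePoint.infty = q := by
  have hq : ‖(q : E)‖ = 1 := norm_eq_of_mem_sphere q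
  have : Fact (Module.finrank ℝ E = Module.finrank ℝ V + 1) := ⟨hdim⟩
  have hV : Module.finrank ℝ V = Module.finrank ℝ (ℝ ∙ (q : E))ᗮ :=
    (Submodule.finrank_orthogonal_span_singleton (ne_zero_of_mem_unit_sphere q)).symm
  let e : V ≃ₜ (ℝ ∙ (q : E))ᗮ :=
    (FiniteDimensional.nonempty_continuousLinearEquiv_of_finrank_eq hV).some.toHomeomorph
  exact ⟨e.onePointCongr.trans (onePointHyperplaneHomeoUnitSphere hq), rfl⟩

theorem exists_homeomorph_onePoint_complex (q : SpherePt) :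
    ∃ e : OnePoint ℂ ≃ₜ SpherePt, e OnePoint.infty = q :=
  exists_homeomorph_onePoint_sphere (by simp [Complex.finrank_real_complex]) q

theorem exists_isOpenEmbedding_complex_sphere (q : SpherePt) :
    ∃ j : ℂ → SpherePt, IsOpenEmbedding j ∧ range j = {q}ᶜ := by
  obtain ⟨e, rfl⟩ := exists_homeomorph_onePoint_complex q
  refine ⟨e ∘ (↑), e.isOpenEmbedding.comp OnePoint.isOpenEmbedding_coe, ?_⟩
  rw [range_comp, ← OnePoint.compl_infty, e.image_compl, image_singleton]

theorem isPreconnected_compl_of_contractibleSpace {K : Set SpherePt} [ContractibleSpace K]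
    (hK : IsClosed K) : IsPreconnected Kᶜ := by
  rintro A B hA hB hcover ⟨x, hxK, hxA⟩ ⟨y, hyK, hyB⟩
  by_contra hAB
  rw [not_nonempty_iff_eq_empty] at hAB
  obtain ⟨j, hj, hrange⟩ := exists_isOpenEmbedding_complex_sphere y
  have hKj : K ⊆ range j := hrange ▸ subset_compl_singleton_iff.2 hyK
  have : ContractibleSpace (j ⁻¹' K) :=
    (hj.isEmbedding.homeomorphOfSubsetRange hKj).contractibleSpace
  have hxy : x ≠ y := by rintro rfl; exact hAB.subset ⟨hxK, hxA, hyB⟩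
  obtain ⟨p, rfl⟩ : x ∈ range j := hrange ▸ hxy
  have hUopen : IsOpen (j ⁻¹' (A \ K)) := (hA.sdiff hK).preimage hj.continuous
  have hUclosed : closure (j ⁻¹' (A \ K)) ⊆ j ⁻¹' (B \ K)ᶜ := by
    refine closure_minimal (fun z hz hzB ↦ hAB.subset ⟨hz.2, hz.1, hzB.1⟩) ?_
    exact (hB.sdiff hK).isClosed_compl.preimage hj.continuous
  have hUbounded : Bornology.IsBounded (j ⁻¹' (A \ K)) := by
    refine IsCompact.isBounded ?_ |>.subset (subset_closure.trans hUclosed)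
    refine hj.isInducing.isCompact_preimage' (hB.sdiff hK).isClosed_compl.isCompact ?_
    exact hrange ▸ compl_subset_compl.2 (singleton_subset_iff.2 ⟨hyB, hyK⟩)
  have hUfrontier : frontier (j ⁻¹' (A \ K)) ⊆ j ⁻¹' K := by
    intro z hz
    rw [hUopen.frontier_eq] at hz
    by_contra hzK
    exact (hcover hzK).elim (fun h ↦ hz.2 ⟨h, hzK⟩) fun h ↦ hUclosed hz.1 ⟨h, hzK⟩
  exact hxK (subset_of_frontier_subset_of_contractibleSpace hUbounded hUfrontier ⟨hxA, hxK⟩)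

theorem isPreconnected_compl_range_of_injective {f : unitInterval → SpherePt} (hf : Continuous f)
    (hinj : Function.Injective f) : IsPreconnected (range f)ᶜ := by
  have hemb := hf.isClosedEmbedding hinj
  have : ContractibleSpace unitInterval :=
    (convex_Icc (0 : ℝ) 1).contractibleSpace ⟨0, unitInterval.zero_mem⟩
  have : ContractibleSpace (range f) := hemb.isEmbedding.toHomeomorph.symm.contractibleSpace
  exact isPreconnected_compl_of_contractibleSpace hemb.isClosed_range

/-! ### Simple closed curves separate the sphere -/

theorem exists_continuousOn_inv_sub_onePoint {𝕜 : Type*} [NormedField 𝕜] [ProperSpace 𝕜] (a : 𝕜) :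
    ∃ m : OnePoint 𝕜 → 𝕜, ContinuousOn m {(a : OnePoint 𝕜)}ᶜ ∧ m OnePoint.infty = 0 ∧
      ∀ z : 𝕜, m z = (a - z)⁻¹ := by
  refine ⟨fun x ↦ x.elim 0 fun z ↦ (a - z)⁻¹, fun x hx ↦ ContinuousAt.continuousWithinAt ?_,
    rfl, fun _ ↦ rfl⟩
  induction x using OnePoint.rec with
  | infty =>
    rw [OnePoint.continuousAt_infty', Filter.coclosedCompact_eq_cocompact,
      ← Metric.cobounded_eq_cocompact]
    exact Filter.tendsto_inv₀_cobounded.comp (tendsto_const_sub_cobounded a)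
  | coe z =>
    have hz : a - z ≠ 0 := sub_ne_zero.2 fun h ↦ hx (h ▸ rfl)
    exact OnePoint.continuousAt_coe.2 ((continuousAt_const.sub continuousAt_id).inv₀ hz)

theorem hasLogOn_sub_of_path {X : Type*} [TopologicalSpace X] (e : OnePoint ℂ ≃ₜ X) {a b : ℂ}
    (γ : Path (e b) (e OnePoint.infty)) (ha : e a ∉ range γ) :
    HasLogOn (fun z ↦ z - b) {z : ℂ | e z ∉ range γ} := by
  obtain ⟨m, hm, hm_infty, hm_coe⟩ := exists_continuousOn_inv_sub_onePoint a
  let s : Set ℂ := {z : ℂ | e z ∉ range γ}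
  -- This is `(z - w) / (a - w)` with `w` running along `γ` from infinity, where it is `1`, to `b`.
  let H : unitInterval × s → ℂ := fun p ↦ 1 + (p.2 - a) * m (e.symm (γ.symm p.1))
  have hcont : Continuous H := by
    refine continuous_const.add (.mul (by fun_prop) (hm.comp_continuous (by fun_prop) ?_))
    rintro ⟨t, z⟩ (h : e.symm (γ.symm t) = a)
    exact ha ⟨_, (e.symm_apply_eq.1 h)⟩
  have hne : ∀ p, H p ≠ 0 := by
    rintro ⟨t, z, hz⟩
    have hzt : γ.symm t ≠ e z := fun h ↦ hz ⟨_, h⟩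
    have hat : γ.symm t ≠ e a := fun h ↦ ha ⟨_, h⟩
    obtain ⟨w, hw⟩ := e.surjective (γ.symm t)
    simp only [H, ← hw, e.symm_apply_apply]
    rw [← hw] at hzt hat
    induction w using OnePoint.rec with
    | infty => simp [hm_infty]
    | coe w =>
      have hwz : z - w ≠ 0 := sub_ne_zero.2 fun h ↦ hzt (by rw [h])
      have hwa : a - w ≠ 0 := sub_ne_zero.2 fun h ↦ hat (by rw [h])
      rw [hm_coe]
      convert div_ne_zero hwz hwa using 1
      field_simp
      ring
  have hab : a - b ≠ 0 := sub_ne_zero.2 fun h ↦ ha ⟨0, by simp [h]⟩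
  have hlog := HasLogOn.of_homotopy hcont hne
    (by simpa [H, hm_infty] using hasLogOn_const 1 one_ne_zero univ)
  refine hasLogOn_iff_subtype.2 ((hlog.mul (hasLogOn_const (a - b) hab univ)).congr fun z _ ↦ ?_)
  simp only [H, Path.target, e.symm_apply_apply, hm_coe]
  field_simp
  ring

theorem not_isPreconnected_compl_union_range_paths {x y : SpherePt} (hxy : x ≠ y) (α β : Path x y)
    (hαβ : range α ∩ range β ⊆ {x, y}) (hne : (range α ∪ range β)ᶜ.Nonempty) :
    ¬ IsPreconnected (range α ∪ range β)ᶜ := by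
  intro hpre
  obtain ⟨e, rfl⟩ := exists_homeomorph_onePoint_complex y
  have hfinite : ∀ z, z ≠ e OnePoint.infty → ∃ p : ℂ, e p = z := fun z hz ↦
    let ⟨p, hp⟩ := OnePoint.ne_infty_iff_exists.1 fun h ↦ hz (e.symm_apply_eq.1 h)
    ⟨p, e.symm_apply_eq.1 hp.symm |>.symm⟩
  obtain ⟨b, rfl⟩ := hfinite x hxy
  obtain ⟨c, hc⟩ := hne
  obtain ⟨a, rfl⟩ := hfinite c (by rintro rfl; exact hc (.inl α.target_mem_range))
  rw [mem_compl_iff, mem_union, not_or] at hc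
  let j : ℂ → SpherePt := e ∘ (↑)
  have hj : IsOpenEmbedding j := e.isOpenEmbedding.comp OnePoint.isOpenEmbedding_coe
  have hopen (γ : Path (e b) (e OnePoint.infty)) : IsOpen (j ⁻¹' (range γ)ᶜ) :=
    (isCompact_range γ.continuous).isClosed.isOpen_compl.preimage hj.continuous
  have hinter : IsPreconnected (j ⁻¹' (range α)ᶜ ∩ j ⁻¹' (range β)ᶜ) := by
    rw [← preimage_inter, ← compl_union]
    refine hpre.preimage_of_isOpenMap hj.injective hj.isOpenMap fun z hz ↦ ?_
    obtain ⟨p, rfl⟩ := hfinite z (by rintro rfl; exact hz (.inl α.target_mem_range))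
    exact mem_range_self p
  have hlog := HasLogOn.union (hopen α) (hopen β) hinter
    (hasLogOn_sub_of_path e α hc.1) (hasLogOn_sub_of_path e β hc.2)
  have hcircle : ∀ w : Circle, b + w ∈ j ⁻¹' (range α)ᶜ ∪ j ⁻¹' (range β)ᶜ := fun w ↦ by
    rw [← preimage_union, ← compl_inter]
    exact fun h ↦ by simpa [j] using hαβ h
  refine not_hasLogOn_const_mul_circle 1 ((hlog.comp (φ := fun w : Circle ↦ b + w) (t := univ)
    (by fun_prop) fun w _ ↦ hcircle w).congr fun w _ ↦ ?_)
  simp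

/-! ### Jordan curves -/

section JordanCurve

variable {X : Type*} [TopologicalSpace X]

/-- A Jordan curve, or simple closed curve: the image of an injective continuous map from the
circle. The drawing of a 3-cycle is one. -/
def IsJordanCurve (C : Set X) : Prop :=
  ∃ f : Circle → X, Continuous f ∧ Function.Injective f ∧ range f = C

theorem isJordanCurve_range_of_injOn {x : X} (γ : Path x x) (hγ : InjOn γ (Ico 0 1)) :
    IsJordanCurve (range γ) := by
  have : Fact ((0 : ℝ) < 1) := ⟨one_pos⟩
  let f : AddCircle (1 : ℝ) → X := AddCircle.liftIco 1 0 γ.extend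
  have hf : Continuous f :=
    AddCircle.liftIco_zero_continuous (by simp) γ.continuous_extend.continuousOn
  have hfγ : ∀ t ∈ Ico (0 : unitInterval) 1, f (t : ℝ) = γ t := fun t ht ↦ by
    rw [← γ.extend_apply t.2]
    exact AddCircle.liftIco_zero_coe_apply ⟨ht.1, ht.2⟩
  have hcoe (z : AddCircle (1 : ℝ)) :
      ∃ t ∈ Ico (0 : unitInterval) 1, ((t : ℝ) : AddCircle (1 : ℝ)) = z := by
    obtain ⟨t, ht, rfl⟩ := AddCircle.coe_image_Ico_eq (1 : ℝ) 0 ▸ mem_univ z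
    rw [zero_add] at ht
    exact ⟨⟨t, Ico_subset_Icc_self ht⟩, ht, rfl⟩
  have hinj : Function.Injective f := fun z w hzw ↦ by
    obtain ⟨s, hs, rfl⟩ := hcoe z
    obtain ⟨t, ht, rfl⟩ := hcoe w
    rw [hfγ s hs, hfγ t ht] at hzw
    rw [hγ hs ht hzw]
  have hrange : range f = range γ := by
    refine Subset.antisymm ?_ ?_
    · rintro _ ⟨z, rfl⟩
      obtain ⟨t, ht, rfl⟩ := hcoe z
      exact ⟨t, (hfγ t ht).symm⟩
    · rintro _ ⟨t, rfl⟩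
      obtain rfl | ht := eq_or_ne t 1
      · exact ⟨((0 : unitInterval) : ℝ), by rw [hfγ 0 (by simp), γ.source, γ.target]⟩
      · exact ⟨(t : ℝ), hfγ t ⟨t.2.1, lt_of_le_of_ne t.2.2 ht⟩⟩
  let e := AddCircle.homeomorphCircle (T := 1) one_ne_zero
  exact ⟨f ∘ e.symm, hf.comp e.symm.continuous, hinj.comp e.symm.injective,
    by rw [e.symm.surjective.range_comp, hrange]⟩

theorem path_trans_eq_left_or_right {x y z : X} (α : Path x y) (β : Path y z) {t : unitInterval}
    (ht : t ∈ Ico 0 1) : (∃ r : unitInterval, (r : ℝ) = 2 * t ∧ α.trans β t = α r) ∨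
      ∃ r ∈ Ioo (0 : unitInterval) 1, (r : ℝ) = 2 * t - 1 ∧ α.trans β t = β r := by
  have ht1 : (t : ℝ) < 1 := ht.2
  rw [Path.trans_apply]
  split_ifs with h
  · exact .inl ⟨_, rfl, rfl⟩
  · refine .inr ⟨_, ⟨?_, ?_⟩, rfl, rfl⟩
    · exact Subtype.coe_lt_coe.1 (by push_cast; linarith)
    · exact Subtype.coe_lt_coe.1 (by push_cast; linarith)

theorem injOn_path_trans_Ico {x y z : X} {α : Path x y} {β : Path y z} (hα : Function.Injective α)
    (hβ : InjOn β (Ico 0 1)) (hαβ : range α ∩ β '' Ico 0 1 ⊆ {y}) :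
    InjOn (α.trans β) (Ico 0 1) := by
  have hne : ∀ r, ∀ r' ∈ Ioo (0 : unitInterval) 1, α r ≠ β r' := fun r r' hr' h ↦ by
    have hy : β r' = y := hαβ ⟨⟨r, h⟩, r', Ioo_subset_Ico_self hr', rfl⟩
    exact hr'.1.ne' (hβ (Ioo_subset_Ico_self hr') (by simp) (hy.trans β.source.symm))
  intro s hs t ht hst
  rcases path_trans_eq_left_or_right α β hs with ⟨r, hr, hsr⟩ | ⟨r, hr01, hr, hsr⟩ <;>
    rcases path_trans_eq_left_or_right α β ht with ⟨r', hr', htr⟩ | ⟨r', hr01', hr', htr⟩ <;>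
    rw [hsr, htr] at hst
  · rw [hα hst] at hr
    exact Subtype.ext (by linarith)
  · exact absurd hst (hne r r' hr01')
  · exact absurd hst.symm (hne r' r hr01)
  · rw [hβ (Ioo_subset_Ico_self hr01) (Ioo_subset_Ico_self hr01') hst] at hr
    exact Subtype.ext (by linarith)

theorem path_trans_image_Ico_subset {x y z : X} (α : Path x y) (β : Path y z) :
    α.trans β '' Ico 0 1 ⊆ range α ∪ β '' Ico 0 1 := by
  rintro _ ⟨t, ht, rfl⟩
  obtain ⟨r, -, h⟩ | ⟨r, hr, -, h⟩ := path_trans_eq_left_or_right α β ht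
  · exact .inl ⟨r, h.symm⟩
  · exact .inr ⟨r, Ioo_subset_Ico_self hr, h.symm⟩

theorem exists_injective_compl_range_subset_of_circle {M : Set Circle} (hM : IsOpen M)
    (hne : M.Nonempty) :
    ∃ g : unitInterval → Circle, Continuous g ∧ Function.Injective g ∧ (range g)ᶜ ⊆ M := by
  obtain ⟨w, hw⟩ := hne
  obtain ⟨θ, rfl⟩ := Circle.exp_surjective w
  obtain ⟨ε, hε, hball⟩ := Metric.isOpen_iff.1 (hM.preimage Circle.exp.continuous) θ hw
  obtain ⟨δ, hδ, hδε⟩ := exists_between (lt_min hε Real.pi_pos)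
  rw [lt_min_iff] at hδε
  have hle : θ + δ < θ - δ + 2 * Real.pi := by linarith
  refine ⟨Circle.exp ∘ Path.segment (θ + δ) (θ - δ + 2 * Real.pi),
    Circle.exp.continuous.comp (Path.continuous _), ?_, fun z hz ↦ ?_⟩
  · refine ((Circle.exp_injOn_Icc (a := θ + δ) (b := θ - δ + 2 * Real.pi)
      (by linarith)).injective_iff _ ?_).2
      (Path.segment_injective_of_ne hle.ne)
    rw [Path.range_segment, segment_eq_Icc hle.le]
  · rw [range_comp, Path.range_segment, segment_eq_Icc hle.le] at hz
    obtain ⟨t, ht, rfl⟩ : z ∈ Circle.exp '' Ioc (θ - δ) (θ - δ + 2 * Real.pi) := by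
      rw [Circle.periodic_exp.image_Ioc Real.two_pi_pos]
      exact Circle.exp_surjective z
    have htδ : t < θ + δ := lt_of_not_ge fun h ↦ hz ⟨t, ⟨h, ht.2⟩, rfl⟩
    refine hball ?_
    rw [Metric.mem_ball, Real.dist_eq, abs_lt]
    constructor <;> linarith [ht.1]

theorem isOpen_diff_connectedComponentIn [LocallyConnectedSpace X] {F : Set X} (hF : IsOpen F)
    (x : X) : IsOpen (F \ connectedComponentIn F x) := by
  refine isOpen_iff_mem_nhds.2 fun y ⟨hyF, hyx⟩ ↦ ?_
  filter_upwards [hF.connectedComponentIn.mem_nhds (mem_connectedComponentIn hyF)] with z hz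
  refine ⟨connectedComponentIn_subset _ _ hz, fun hzx ↦ hyx ?_⟩
  rw [connectedComponentIn_eq hzx, ← connectedComponentIn_eq hz]
  exact mem_connectedComponentIn hyF

instance : LocallyConnectedSpace SpherePt :=
  ChartedSpace.locallyConnectedSpace (EuclideanSpace ℝ (Fin 2)) _

namespace IsJordanCurve

variable {C : Set X}

theorem exists_injective_diff_range_subset (hC : IsJordanCurve C) {N : Set X} (hN : IsOpen N)
    (hNC : (N ∩ C).Nonempty) :
    ∃ g : unitInterval → X, Continuous g ∧ Function.Injective g ∧ range g ⊆ C ∧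
      C \ range g ⊆ N := by
  obtain ⟨f, hf, hinj, rfl⟩ := hC
  obtain ⟨_, hw, w, rfl⟩ := hNC
  obtain ⟨g, hg, hginj, hgN⟩ :=
    exists_injective_compl_range_subset_of_circle (hN.preimage hf) ⟨w, hw⟩
  refine ⟨f ∘ g, hf.comp hg, hinj.comp hginj, range_comp_subset_range g f, ?_⟩
  rintro _ ⟨⟨z, rfl⟩, hz⟩
  exact hgN fun ⟨t, ht⟩ ↦ hz ⟨t, congrArg f ht⟩

theorem isClosed [T2Space X] (hC : IsJordanCurve C) : IsClosed C := by
  obtain ⟨f, hf, -, rfl⟩ := hC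
  exact (isCompact_range hf).isClosed

theorem not_isConnected_compl {C : Set SpherePt} (hC : IsJordanCurve C) : ¬ IsConnected Cᶜ := by
  rintro ⟨hne, hpre⟩
  obtain ⟨f, hf, hinj, rfl⟩ := hC
  have h1 : (1 : Circle) ≠ -1 := Circle.ext_iff.not.2 (by norm_num)
  let α := (Circle.path 1 (-1)).map hf
  let β := ((Circle.path (-1) 1).map hf).symm
  have hunion : range α ∪ range β = range f := by
    simp only [α, β, Path.symm_range, Path.map_coe, range_comp f, ← image_union,
      Circle.range_path_union_range_path h1, image_univ]
  have hinter : range α ∩ range β ⊆ {f 1, f (-1)} := by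
    simp only [α, β, Path.symm_range, Path.map_coe, range_comp f, ← image_inter hinj,
      Circle.range_path_inter_range_path h1, image_pair, subset_rfl]
  rw [← hunion] at hne hpre
  exact not_isPreconnected_compl_union_range_paths (hinj.ne h1) α β hinter hne hpre

theorem interior_connectedComponentIn_compl_union {C : Set SpherePt} (hC : IsJordanCurve C)
    {q : SpherePt} (hq : q ∉ C) :
    interior (connectedComponentIn Cᶜ q ∪ C) = connectedComponentIn Cᶜ q := by
  have hopen : IsOpen (connectedComponentIn Cᶜ q) := hC.isClosed.isOpen_compl.connectedComponentIn
  set U := connectedComponentIn Cᶜ q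
  set W := Cᶜ \ U
  set N := interior (U ∪ C)
  have hUC : U ⊆ Cᶜ := connectedComponentIn_subset _ _
  have hqU : q ∈ U := mem_connectedComponentIn hq
  have hU : IsConnected U := isConnected_connectedComponentIn_iff.2 hq
  have hNsub : N ⊆ U ∪ C := interior_subset
  suffices hNC : ¬ (N ∩ C).Nonempty from
    Subset.antisymm (fun z hz ↦ (hNsub hz).resolve_right fun hzC ↦ hNC ⟨z, hz, hzC⟩)
      (interior_maximal subset_union_left hopen)
  intro hNC
  -- Opening `C` up inside `N` leaves an arc whose complement would be separated by `U ∪ N` and `W`.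
  obtain ⟨g, hg, hinj, hgC, hgN⟩ := hC.exists_injective_diff_range_subset isOpen_interior hNC
  have hW : W.Nonempty := by
    rw [nonempty_iff_ne_empty, Ne, sdiff_eq_empty]
    exact fun h ↦ hC.not_isConnected_compl (hUC.antisymm h ▸ hU)
  obtain ⟨w, hw⟩ := hW
  have hcover : (range g)ᶜ ⊆ U ∪ N ∪ W := fun z hz ↦ by
    by_cases hzC : z ∈ C
    · exact .inl (.inr (hgN ⟨hzC, hz⟩))
    · exact (em (z ∈ U)).imp .inl fun hzU ↦ ⟨hzC, hzU⟩
  obtain ⟨z, -, hzUN, hzW⟩ := isPreconnected_compl_range_of_injective hg hinj (U ∪ N) W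
    (hopen.union isOpen_interior) (isOpen_diff_connectedComponentIn hC.isClosed.isOpen_compl q)
    hcover ⟨q, fun h ↦ hq (hgC h), .inl hqU⟩ ⟨w, fun h ↦ hw.1 (hgC h), hw⟩
  exact hzUN.elim hzW.2 fun hzN ↦ (hNsub hzN).elim hzW.2 hzW.1

end IsJordanCurve

namespace IsClosedSide

variable {C Δ : Set SpherePt}

theorem interior_union (h : IsClosedSide C Δ) (hC : IsJordanCurve C) : interior Δ ∪ C = Δ := by
  obtain ⟨q, hq, rfl⟩ := h
  rw [hC.interior_connectedComponentIn_compl_union hq]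

theorem isOpenSide_interior (h : IsClosedSide C Δ) (hC : IsJordanCurve C) :
    IsOpenSide C (interior Δ) := by
  obtain ⟨q, hq, rfl⟩ := h
  exact ⟨q, hq, hC.interior_connectedComponentIn_compl_union hq⟩

theorem disjoint_interior (h : IsClosedSide C Δ) (hC : IsJordanCurve C) :
    Disjoint (interior Δ) C := by
  obtain ⟨q, -, hq⟩ := h.isOpenSide_interior hC
  exact hq ▸ disjoint_left.2 fun _ hz ↦ connectedComponentIn_subset _ _ hz

end IsClosedSide

end JordanCurve

/-! ### Hereditarily convex drawings -/

namespace GoodDrawing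

variable {n : ℕ} {X : Type*} [TopologicalSpace X] (D : GoodDrawing n X) {a b c u v w x : Fin n}

theorem exists_injective_path (h : u ≠ v) :
    ∃ γ : Path (D.vtx u) (D.vtx v), Function.Injective γ ∧ range γ = D.arc u v := by
  obtain ⟨f, hf, hinj, h0, h1, hr⟩ := D.isArc u v h
  refine ⟨⟨⟨(Icc 0 1).domRestrict f, hf.domRestrict⟩, h0, h1⟩, hinj.injective, ?_⟩
  rw [hr, ← range_domRestrict]
  rfl

theorem left_mem_arc (h : u ≠ v) : D.vtx u ∈ D.arc u v := by
  obtain ⟨γ, -, hγ⟩ := D.exists_injective_path h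
  exact hγ ▸ ⟨0, γ.source⟩

theorem right_mem_arc (h : u ≠ v) : D.vtx v ∈ D.arc u v :=
  D.arc_symm u v ▸ D.left_mem_arc h.symm

theorem isJordanCurve_tri (hab : a ≠ b) (hac : a ≠ c) (hbc : b ≠ c) :
    IsJordanCurve (D.tri a b c) := by
  obtain ⟨α, hα, hrα⟩ := D.exists_injective_path hab
  obtain ⟨β, hβ, hrβ⟩ := D.exists_injective_path hbc
  obtain ⟨γ, hγ, hrγ⟩ := D.exists_injective_path hac.symm
  have htri : range (α.trans (β.trans γ)) = D.tri a b c := by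
    rw [Path.trans_range, Path.trans_range, hrα, hrβ, hrγ, D.arc_symm c a, ← union_assoc, tri]
  have hγ_sub : γ '' Ico 0 1 ⊆ D.arc c a := hrγ ▸ image_subset_range _ _
  have ha : D.vtx a ∉ γ '' Ico 0 1 := by
    rintro ⟨t, ht, hta⟩
    exact ht.2.ne (hγ (hta.trans γ.target.symm))
  have hβγ : range β ∩ γ '' Ico 0 1 ⊆ {D.vtx c} := by
    rw [← D.adj_arcs c b a hbc.symm hac.symm hab.symm, hrβ, D.arc_symm b c]
    exact inter_subset_inter_right _ hγ_sub
  have hαβγ : range α ∩ β.trans γ '' Ico 0 1 ⊆ {D.vtx b} := by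
    rintro z ⟨hzα, hz⟩
    rw [hrα] at hzα
    obtain hzβ | hzγ := path_trans_image_Ico_subset β γ hz
    · rw [← D.adj_arcs b a c hab.symm hbc hac, D.arc_symm b a]
      exact ⟨hzα, hrβ ▸ hzβ⟩
    · have hza : z ∈ ({D.vtx a} : Set X) := by
        rw [← D.adj_arcs a b c hab hac hbc, D.arc_symm a c]
        exact ⟨hzα, hγ_sub hzγ⟩
      exact absurd (hza ▸ hzγ) ha
  rw [← htri]
  exact isJordanCurve_range_of_injOn _
    (injOn_path_trans_Ico hα (injOn_path_trans_Ico hβ hγ.injOn hβγ) hαβγ)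

variable {D} in
theorem ConvexDisc.tri_subset {Δ : Set X} (hΔ : D.ConvexDisc Δ) (hab : a ≠ b) (hac : a ≠ c)
    (hbc : b ≠ c) (ha : D.vtx a ∈ Δ) (hb : D.vtx b ∈ Δ) (hc : D.vtx c ∈ Δ) :
    D.tri a b c ⊆ Δ :=
  union_subset (union_subset (hΔ a b hab ha hb) (hΔ b c hbc hb hc)) (hΔ a c hac ha hc)

theorem fst_mem_tri (c : Fin n) (hab : a ≠ b) : D.vtx a ∈ D.tri a b c :=
  .inl (.inl (D.left_mem_arc hab))

theorem snd_mem_tri (c : Fin n) (hab : a ≠ b) : D.vtx b ∈ D.tri a b c :=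
  .inl (.inl (D.right_mem_arc hab))

theorem thd_mem_tri (a : Fin n) (hbc : b ≠ c) : D.vtx c ∈ D.tri a b c :=
  .inl (.inr (D.right_mem_arc hbc))

theorem vtx_notMem_tri (hab : a ≠ b) (hac : a ≠ c) (hbc : b ≠ c) (hxa : x ≠ a) (hxb : x ≠ b)
    (hxc : x ≠ c) : D.vtx x ∉ D.tri a b c :=
  not_or.2 ⟨not_or.2 ⟨D.vtx_not_mem a b x hab hxa hxb, D.vtx_not_mem b c x hbc hxb hxc⟩,
    D.vtx_not_mem a c x hac hxa hxc⟩

/-- A choice `Δ` of a convex closed side of every 3-cycle witnessing that `D` is hereditarily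
convex. The 3-cycles are indexed by ordered triples of distinct vertices, so `Δ` is required to be
symmetric; its values on triples with repetitions are irrelevant. -/
structure IsHereditaryChoice (Δ : Fin n → Fin n → Fin n → Set X) : Prop where
  isClosedSide : ∀ ⦃a b c⦄, a ≠ b → a ≠ c → b ≠ c → IsClosedSide (D.tri a b c) (Δ a b c)
  convexDisc : ∀ ⦃a b c⦄, a ≠ b → a ≠ c → b ≠ c → D.ConvexDisc (Δ a b c)
  swap_left : ∀ a b c, Δ a b c = Δ b a c
  swap_right : ∀ a b c, Δ a b c = Δ a c b
  subset_of_tri_subset : ∀ ⦃a b c a' b' c'⦄, a ≠ b → a ≠ c → b ≠ c → a' ≠ b' → a' ≠ c' → b' ≠ c' →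
    D.tri a' b' c' ⊆ Δ a b c → Δ a' b' c' ⊆ Δ a b c

namespace IsHereditaryChoice

section General

variable {D} {Δ : Fin n → Fin n → Fin n → Set X}

theorem tri_subset (hΔ : D.IsHereditaryChoice Δ) (hab : a ≠ b) (hac : a ≠ c) (hbc : b ≠ c) :
    D.tri a b c ⊆ Δ a b c := by
  obtain ⟨q, -, hq⟩ := hΔ.isClosedSide hab hac hbc
  exact hq ▸ subset_union_right

theorem subset_of_vtx_mem (hΔ : D.IsHereditaryChoice Δ) (hab : a ≠ b) (hac : a ≠ c)
    (hbc : b ≠ c) (hxa : x ≠ a) (hxb : x ≠ b) (hx : D.vtx x ∈ Δ a b c) : Δ a b x ⊆ Δ a b c :=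
  hΔ.subset_of_tri_subset hab hac hbc hab hxa.symm hxb.symm <|
    (hΔ.convexDisc hab hac hbc).tri_subset hab hxa.symm hxb.symm
      (hΔ.tri_subset hab hac hbc (D.fst_mem_tri c hab))
      (hΔ.tri_subset hab hac hbc (D.snd_mem_tri c hab)) hx

theorem exists_eq_of_mem (hΔ : D.IsHereditaryChoice Δ) (hab : a ≠ b) (hac : a ≠ c) (hbc : b ≠ c)
    (hu : u ∈ ({a, b, c} : Set (Fin n))) (hv : v ∈ ({a, b, c} : Set (Fin n))) (huv : u ≠ v) :
    ∃ w, w ≠ u ∧ w ≠ v ∧ Δ u v w = Δ a b c := by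
  rcases hu with rfl | rfl | rfl <;> rcases hv with rfl | rfl | rfl
  · exact absurd rfl huv
  · exact ⟨c, hac.symm, hbc.symm, rfl⟩
  · exact ⟨b, hab.symm, hbc, hΔ.swap_right ..⟩
  · exact ⟨c, hbc.symm, hac.symm, hΔ.swap_left ..⟩
  · exact absurd rfl huv
  · exact ⟨a, hab, hac, (hΔ.swap_right ..).trans (hΔ.swap_left ..)⟩
  · exact ⟨b, hbc, hab.symm, (hΔ.swap_left ..).trans (hΔ.swap_right ..)⟩
  · exact ⟨a, hac, hab, ((hΔ.swap_right ..).trans (hΔ.swap_left ..)).trans (hΔ.swap_right ..)⟩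
  · exact absurd rfl huv

end General

variable {D : GoodDrawing n SpherePt} {Δ : Fin n → Fin n → Fin n → Set SpherePt}

theorem disjoint_interior_tri (hΔ : D.IsHereditaryChoice Δ) (hab : a ≠ b) (hac : a ≠ c)
    (hbc : b ≠ c) : Disjoint (interior (Δ a b c)) (D.tri a b c) :=
  (hΔ.isClosedSide hab hac hbc).disjoint_interior (D.isJordanCurve_tri hab hac hbc)

theorem isOpenSide_interior (hΔ : D.IsHereditaryChoice Δ) (hab : a ≠ b) (hac : a ≠ c)
    (hbc : b ≠ c) : IsOpenSide (D.tri a b c) (interior (Δ a b c)) :=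
  (hΔ.isClosedSide hab hac hbc).isOpenSide_interior (D.isJordanCurve_tri hab hac hbc)

theorem ssubset_of_vtx_mem_interior (hΔ : D.IsHereditaryChoice Δ) (hab : a ≠ b) (hac : a ≠ c)
    (hbc : b ≠ c) (hx : D.vtx x ∈ interior (Δ a b c)) :
    x ≠ a ∧ x ≠ b ∧ Δ a b x ⊂ Δ a b c := by
  have hx_tri := (hΔ.disjoint_interior_tri hab hac hbc).notMem_of_mem_left hx
  have hc_tri := D.thd_mem_tri a hbc
  have hxa : x ≠ a := by rintro rfl; exact hx_tri (D.fst_mem_tri c hab)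
  have hxb : x ≠ b := by rintro rfl; exact hx_tri (D.snd_mem_tri c hab)
  have hxc : x ≠ c := by rintro rfl; exact hx_tri hc_tri
  have hsub := hΔ.subset_of_vtx_mem hab hac hbc hxa hxb (interior_subset hx)
  refine ⟨hxa, hxb, hsub, fun h ↦ ?_⟩
  have hc : D.vtx c ∈ interior (Δ a b x) ∪ D.tri a b x := by
    rw [(hΔ.isClosedSide hab hxa.symm hxb.symm).interior_union
      (D.isJordanCurve_tri hab hxa.symm hxb.symm)]
    exact h (hΔ.tri_subset hab hac hbc hc_tri)
  obtain hc_int | hc_abx := hc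
  · exact (hΔ.disjoint_interior_tri hab hac hbc).notMem_of_mem_left (interior_mono hsub hc_int)
      hc_tri
  · exact D.vtx_notMem_tri hab hxa.symm hxb.symm hac.symm hbc.symm hxc.symm hc_abx

theorem exists_subset_forall_vtx_notMem_interior (hΔ : D.IsHereditaryChoice Δ) (hab : a ≠ b)
    (hac : a ≠ c) (hbc : b ≠ c) :
    ∃ w, w ≠ a ∧ w ≠ b ∧ Δ a b w ⊆ Δ a b c ∧ ∀ i, D.vtx i ∉ interior (Δ a b w) := by
  let S := {w | w ≠ a ∧ w ≠ b ∧ Δ a b w ⊆ Δ a b c}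
  obtain ⟨w, ⟨hwa, hwb, hwc⟩, hmin⟩ :=
    (toFinite S).exists_minimalFor (Δ a b) S ⟨c, hac.symm, hbc.symm, subset_rfl⟩
  refine ⟨w, hwa, hwb, hwc, fun i hi ↦ ?_⟩
  obtain ⟨hia, hib, hlt⟩ := hΔ.ssubset_of_vtx_mem_interior hab hwa.symm hwb.symm hi
  have hiS : i ∈ S := ⟨hia, hib, hlt.subset.trans hwc⟩
  exact hlt.not_subset (hmin hiS hlt.subset)

end IsHereditaryChoice

end GoodDrawing

/-- In a hereditarily convex drawing with chosen convex discs `Δch`, every edge `uv` of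
every 3-cycle `(a,b,c)` lies in a 3-cycle `(u,v,w)` whose chosen disc is contained in
`Δch a b c` and whose interior is an empty triangle. -/
theorem empty_triangle_in_convex_side (n : ℕ) (D : GoodDrawing n SpherePt)
    (Δch : Fin n → Fin n → Fin n → Set SpherePt)
    (hside : ∀ a b c : Fin n, a ≠ b → a ≠ c → b ≠ c →
      IsClosedSide (D.tri a b c) (Δch a b c) ∧ D.ConvexDisc (Δch a b c))
    (hsymm : ∀ a b c : Fin n, Δch a b c = Δch b a c ∧ Δch a b c = Δch a c b)
    (hher : ∀ a b c a' b' c' : Fin n, a ≠ b → a ≠ c → b ≠ c →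
      a' ≠ b' → a' ≠ c' → b' ≠ c' →
      D.tri a' b' c' ⊆ Δch a b c → Δch a' b' c' ⊆ Δch a b c)
    (a b c : Fin n) (hab : a ≠ b) (hac : a ≠ c) (hbc : b ≠ c)
    (u v : Fin n) (hu : u ∈ ({a, b, c} : Set (Fin n))) (hv : v ∈ ({a, b, c} : Set (Fin n)))
    (huv : u ≠ v) :
    ∃ w : Fin n, w ≠ u ∧ w ≠ v ∧ Δch u v w ⊆ Δch a b c ∧
      IsOpenSide (D.tri u v w) (interior (Δch u v w)) ∧
      ∀ i : Fin n, D.vtx i ∉ interior (Δch u v w) := by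
  have hΔ : D.IsHereditaryChoice Δch :=
    { isClosedSide := fun a b c hab hac hbc ↦ (hside a b c hab hac hbc).1
      convexDisc := fun a b c hab hac hbc ↦ (hside a b c hab hac hbc).2
      swap_left := fun a b c ↦ (hsymm a b c).1
      swap_right := fun a b c ↦ (hsymm a b c).2
      subset_of_tri_subset := hher }
  obtain ⟨x, hxu, hxv, hx⟩ := hΔ.exists_eq_of_mem hab hac hbc hu hv huv
  obtain ⟨w, hwu, hwv, hsub, hempty⟩ :=
    hΔ.exists_subset_forall_vtx_notMem_interior huv hxu.symm hxv.symm
  exact ⟨w, hwu, hwv, hx ▸ hsub, hΔ.isOpenSide_interior huv hwu.symm hwv.symm, hempty⟩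

end
end

section
/- There is a constant c > 0 such that for every n ≥ 2, every hereditarily convex intermediate value good drawing of K_n in the sphere has at least n² − c·n·log n empty triangles. -/
open Set Topology

noncomputable section

/-! The empty triangles are found among the chosen discs `Δ a b c`. Winding numbers, computed with
continuous logarithms after stereographic projection, show that the complement of each drawn
triangle has exactly two components and that both accumulate at every interior point of every edge.
Let `χ a b c` be the jump of the winding number of the oriented triangle `a b c` from the outside
to the inside of `Δ a b c`; it is nonzero and alternating. If the vertex `x` lies inside `Δ a b c`,
then hereditary convexity gives `Δ a b x ⊆ Δ a b c`, and comparing the two discs along the edge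
`a b` gives `χ a b x = χ a b c`. From here on the argument is combinatorial.

Fix `i < j`. By the intermediate value property the vertices inside a triangle `i l j` with
`i < l < j` again lie between `i` and `j`, so descending through nested triangles reaches an empty
triangle `i k j`. There are two of them unless `i` and `j` are adjacent in the order, which happens
for fewer than `n` pairs, or a single `k` lies in or on every triangle `i l j`. For fixed `i`, two
pairs `(i, j)` and `(i, j')` of the latter kind whose middle vertices precede both `j` and `j'`
have opposite signs `χ`; three are impossible. Cutting the order in half recursively therefore
leaves `O(n log n)` exceptional pairs among the `n (n - 1) / 2`. -/

/-! ### Functions locally constant off a closed set -/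

section LocallyConstantOff

variable {X α : Type*} [TopologicalSpace X]

/-- `f` is locally constant at every point outside `K`; nothing is said about its values on `K`. -/
def LocallyConstantOff (K : Set X) (f : X → α) : Prop :=
  ∀ p ∉ K, ∀ᶠ q in 𝓝 p, f q = f p

namespace LocallyConstantOff

variable {K S : Set X} {f : X → α}

lemma isOpen_setOf (hf : LocallyConstantOff K f) (hK : IsClosed K) (P : α → Prop) :
    IsOpen {p | p ∉ K ∧ P (f p)} := by
  refine isOpen_iff_mem_nhds.2 fun p ⟨hpK, hp⟩ => ?_
  filter_upwards [hf p hpK, hK.isOpen_compl.mem_nhds hpK] with q hq hqK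
  exact ⟨hqK, hq ▸ hp⟩

lemma frontier_setOf_subset (hf : LocallyConstantOff K f) (hK : IsClosed K) (P : α → Prop) :
    frontier {p | p ∉ K ∧ P (f p)} ⊆ K := by
  intro p hp
  by_contra hpK
  have hp_not : ¬P (f p) := fun h =>
    (hf.isOpen_setOf hK P).inter_frontier_eq.subset ⟨⟨hpK, h⟩, hp⟩
  obtain ⟨q, hq, -, hqP⟩ := mem_closure_iff_nhds.1 hp.1 _ (hf p hpK)
  exact hp_not (hq ▸ hqP)

lemma eq_of_isPreconnected (hf : LocallyConstantOff K f) (hS : IsPreconnected S) (hSK : S ⊆ Kᶜ)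
    {p q : X} (hp : p ∈ S) (hq : q ∈ S) : f p = f q := by
  let _ : TopologicalSpace α := ⊥
  have : DiscreteTopology α := ⟨rfl⟩
  refine hS.constant (fun x hx => ContinuousAt.continuousWithinAt ?_) hp hq
  exact tendsto_nhds_of_eventually_eq (hf x (hSK hx))

lemma connectedComponentIn_subset (hf : LocallyConstantOff K f) {q : X} (hq : q ∉ K) :
    connectedComponentIn Kᶜ q ⊆ {p | p ∉ K ∧ f p = f q} := fun _ hp =>
  have hsub := _root_.connectedComponentIn_subset Kᶜ q
  ⟨hsub hp, hf.eq_of_isPreconnected isPreconnected_connectedComponentIn hsub hp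
    (mem_connectedComponentIn hq)⟩

end LocallyConstantOff

lemma frontier_connectedComponentIn_compl_subset [LocallyConnectedSpace X] {K : Set X}
    (hK : IsClosed K) (q : X) : frontier (connectedComponentIn Kᶜ q) ⊆ K := by
  intro x hx
  by_contra hxK
  have hopen := fun y => hK.isOpen_compl.connectedComponentIn (x := y)
  obtain ⟨y, hyx, hyq⟩ := mem_closure_iff.1 hx.1 _ (hopen x) (mem_connectedComponentIn hxK)
  have hxq : x ∈ connectedComponentIn Kᶜ q := by
    rw [connectedComponentIn_eq hyq, ← connectedComponentIn_eq hyx]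
    exact mem_connectedComponentIn hxK
  exact (hopen q).inter_frontier_eq.subset ⟨hxq, hx⟩

end LocallyConstantOff

/-! ### Continuous logarithms -/

section ContinuousLogarithms

open Complex

lemma isDiscrete_setOf_exp_eq (c : ℂ) : IsDiscrete {w : ℂ | exp w = c} := by
  by_cases hc : c = 0
  · simpa [hc] using subsingleton_empty.isDiscrete
  · exact ⟨(isCoveringMapOn_exp c hc).discreteTopology_fiber⟩

section

variable {X : Type*} [TopologicalSpace X] {f : X → ℂ} {c : ℂ}

lemma eq_of_exp_eq_const {S : Set X} (hS : IsPreconnected S) (hf : ContinuousOn f S)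
    (hc : ∀ x ∈ S, exp (f x) = c) {x y : X} (hx : x ∈ S) (hy : y ∈ S) : f x = f y :=
  hS.constant_of_mapsTo (isDiscrete_setOf_exp_eq c) hf hc hx hy

lemma eventually_eq_of_exp_eq_const {x : X} (hf : ContinuousAt f x)
    (hc : ∀ᶠ y in 𝓝 x, exp (f y) = c) : ∀ᶠ y in 𝓝 x, f y = f x := by
  have hfx : {f x} ∈ 𝓝[{w | exp w = c}] f x :=
    singleton_mem_nhdsWithin_of_mem_discrete (isDiscrete_setOf_exp_eq c) hc.self_of_nhds
  exact tendsto_nhdsWithin_iff.2 ⟨hf, hc⟩ hfx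

end

lemma exists_continuous_exp_eq {X : Type*} [TopologicalSpace X] [SimplyConnectedSpace X]
    [LocallyPathConnectedSpace X] {F : X → ℂ} (hF : Continuous F) (hF0 : ∀ x, F x ≠ 0) :
    ∃ g : X → ℂ, Continuous g ∧ ∀ x, exp (g x) = F x := by
  obtain ⟨x₀⟩ : Nonempty X := inferInstance
  obtain ⟨g, ⟨-, hg⟩, -⟩ :=
    isCoveringMapOn_exp.existsUnique_continuousMap_lifts ⟨F, hF⟩ (exp_log (hF0 x₀)) hF0
  exact ⟨g, g.continuous, congrFun hg⟩

section HasLog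

variable {X : Type*} [TopologicalSpace X]

/-- `F` has a continuous logarithm on `K`. -/
def HasLog (K : Set X) (F : X → ℂ) : Prop :=
  ∃ g : X → ℂ, ContinuousOn g K ∧ ∀ z ∈ K, exp (g z) = F z

namespace HasLog

variable {A B : Set X} {F : X → ℂ}

lemma mono (h : HasLog B F) (hAB : A ⊆ B) : HasLog A F :=
  let ⟨g, hg, hF⟩ := h
  ⟨g, hg.mono hAB, fun z hz => hF z (hAB hz)⟩

lemma exists_value_eq (h : HasLog A F) {x : X} (hx : x ∈ A) {w : ℂ} (hw : exp w = F x) :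
    ∃ g : X → ℂ, ContinuousOn g A ∧ (∀ z ∈ A, exp (g z) = F z) ∧ g x = w := by
  obtain ⟨g, hg, hF⟩ := h
  refine ⟨fun z => g z + (w - g x), hg.add continuousOn_const, fun z hz => ?_, by ring⟩
  rw [exp_add, exp_sub, hw, hF x hx, hF z hz, div_self (hw ▸ exp_ne_zero w), mul_one]

lemma exists_continuous [NormalSpace X] (h : HasLog A F) (hA : IsClosed A) :
    ∃ g : X → ℂ, Continuous g ∧ ∀ z ∈ A, exp (g z) = F z := by
  obtain ⟨g, hg, hF⟩ := h
  obtain ⟨G, hG⟩ := ContinuousMap.exists_restrict_eq hA ⟨_, hg.domRestrict⟩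
  refine ⟨G, G.continuous, fun z hz => ?_⟩
  rw [← hF z hz]
  exact congrArg exp (DFunLike.congr_fun hG ⟨z, hz⟩)

end HasLog

lemma hasLog_union_of_eqOn {A B : Set X} {F g h : X → ℂ} (hA : IsClosed A) (hB : IsClosed B)
    (hg : ContinuousOn g A) (hgF : ∀ z ∈ A, exp (g z) = F z) (hh : ContinuousOn h B)
    (hhF : ∀ z ∈ B, exp (h z) = F z) (hgh : EqOn g h (A ∩ B)) : HasLog (A ∪ B) F := by
  classical
  have hpA : EqOn (A.piecewise g h) g A := A.piecewise_eqOn g h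
  have hpB : EqOn (A.piecewise g h) h B := fun z hz => by
    by_cases hzA : z ∈ A
    · rw [hpA hzA, hgh ⟨hzA, hz⟩]
    · exact A.piecewise_eq_of_notMem g h hzA
  refine ⟨A.piecewise g h, (hg.congr hpA).union_of_isClosed (hh.congr hpB) hA hB, ?_⟩
  rintro z (hz | hz)
  · rw [hpA hz, hgF z hz]
  · rw [hpB hz, hhF z hz]

lemma HasLog.union {A B : Set X} {F : X → ℂ} (hFA : HasLog A F) (hFB : HasLog B F)
    (hA : IsClosed A) (hB : IsClosed B) (hAB : (A ∩ B).Subsingleton) : HasLog (A ∪ B) F := by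
  obtain ⟨g, hg, hgF⟩ := hFA
  rcases hAB.eq_empty_or_singleton with hAB | ⟨x, hAB⟩
  · obtain ⟨h, hh, hhF⟩ := hFB
    exact hasLog_union_of_eqOn hA hB hg hgF hh hhF (by simp [hAB])
  · have hx : x ∈ A ∩ B := hAB ▸ mem_singleton x
    obtain ⟨h, hh, hhF, hhx⟩ := hFB.exists_value_eq hx.2 (hgF x hx.1)
    exact hasLog_union_of_eqOn hA hB hg hgF hh hhF (by simp [hAB, hhx])

end HasLog

lemma hasLog_Icc {s t : ℝ} (hst : s ≤ t) {F : ℝ → ℂ} (hF : ContinuousOn F (Icc s t))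
    (hF0 : ∀ u ∈ Icc s t, F u ≠ 0) : HasLog (Icc s t) F := by
  obtain ⟨g, hg, hgF⟩ := exists_continuous_exp_eq
    (F := IccExtend hst ((Icc s t).domRestrict F)) hF.domRestrict.Icc_extend'
    fun u => hF0 _ (projIcc s t hst u).2
  exact ⟨g, hg.continuousOn, fun u hu => (hgF u).trans (IccExtend_of_mem hst _ hu)⟩

lemma eq_zero_of_hasLog_zpow_sphere {p : ℂ} {R : ℝ} (hR : 0 < R) {m : ℤ}
    (h : HasLog (Metric.sphere p R) fun z => (z - p) ^ m) : m = 0 := by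
  obtain ⟨g, hg, hge⟩ := h
  have hcircle : ∀ t : ℝ, circleMap p R t ∈ Metric.sphere p R := circleMap_mem_sphere p hR.le
  have hcont : Continuous fun t : ℝ => g (circleMap p R t) - m * (t * I) :=
    (hg.comp_continuous (continuous_circleMap p R) hcircle).sub (by fun_prop)
  have hconst := eq_of_exp_eq_const (c := (R : ℂ) ^ m) isPreconnected_univ hcont.continuousOn
    (fun t _ => by
      rw [exp_sub, hge _ (hcircle t), exp_int_mul]
      simp only [circleMap_sub_center, circleMap_zero, mul_zpow]
      exact mul_div_cancel_right₀ _ (zpow_ne_zero _ (exp_ne_zero _)))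
    (mem_univ 0) (mem_univ (2 * Real.pi))
  have hperiod : circleMap p R (2 * Real.pi) = circleMap p R 0 := by simp [circleMap]
  have hm : (m : ℂ) * (2 * Real.pi * I) = 0 := by
    rw [hperiod] at hconst
    push_cast at hconst
    linear_combination hconst
  exact_mod_cast (mul_eq_zero.1 hm).resolve_right two_pi_I_ne_zero

/-- Eilenberg's criterion: a factor `(z - p) ^ m` with `p ∈ U` is seen by the boundary of `U`. -/
lemma eq_zero_of_hasLog_frontier {U : Set ℂ} (hU : IsOpen U) (hUb : Bornology.IsBounded U)
    {p : ℂ} (hp : p ∈ U) {H : ℂ → ℂ} {m : ℤ} (hH : ContinuousOn H (closure U))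
    (hH0 : ∀ z ∈ closure U, H z ≠ 0)
    (hlog : HasLog (frontier U) fun z => (z - p) ^ m * H z) : m = 0 := by
  classical
  obtain ⟨G, hG, hGe⟩ := hlog.exists_continuous isClosed_frontier
  have hne : ∀ z ∈ Uᶜ, z - p ≠ 0 := fun z hz => sub_ne_zero.2 (ne_of_mem_of_not_mem hp hz).symm
  set h : ℂ → ℂ := (closure U).piecewise (fun z => exp (G z) / H z) fun z => (z - p) ^ m
  have h_in : EqOn h (fun z => exp (G z) / H z) (closure U) := piecewise_eqOn _ _ _
  have h_out : EqOn h (fun z => (z - p) ^ m) Uᶜ := fun z hz => by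
    by_cases hzc : z ∈ closure U
    · have hzf : z ∈ frontier U := by rw [hU.frontier_eq]; exact ⟨hzc, hz⟩
      rw [h_in hzc]
      simp only [hGe z hzf, mul_div_cancel_right₀ _ (hH0 z hzc)]
    · exact piecewise_eq_of_notMem _ _ _ hzc
  have hcont : Continuous h := by
    rw [← continuousOn_univ, ← univ_subset_iff.1 ((union_compl_self U).ge.trans
      (union_subset_union_left _ subset_closure))]
    refine ContinuousOn.union_of_isClosed ?_ ?_ isClosed_closure hU.isClosed_compl
    · exact (hG.cexp.continuousOn.div hH hH0).congr h_in
    · refine ContinuousOn.congr (ContinuousOn.zpow₀ (by fun_prop) _ ?_) h_out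
      exact fun z hz => .inl (hne z hz)
  obtain ⟨L, hL, hLe⟩ := exists_continuous_exp_eq hcont fun z => by
    by_cases hz : z ∈ closure U
    · rw [h_in hz]
      exact div_ne_zero (exp_ne_zero _) (hH0 z hz)
    · have hzU : z ∈ Uᶜ := fun hzU => hz (subset_closure hzU)
      rw [h_out hzU]
      exact zpow_ne_zero _ (hne z hzU)
  obtain ⟨R, hR0, hR⟩ := hUb.subset_ball_lt 0 p
  refine eq_zero_of_hasLog_zpow_sphere (p := p) hR0 ⟨L, hL.continuousOn, fun z hz => ?_⟩
  have hzU : z ∈ Uᶜ := fun hzU => (Metric.mem_ball.1 (hR hzU)).ne hz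
  rw [hLe, h_out hzU]

end ContinuousLogarithms

/-! ### Logarithmic variation along arcs -/

section LogArc

open Complex

lemma continuousOn_invFunOn_image {X Y : Type*} [TopologicalSpace X] [Nonempty X]
    [TopologicalSpace Y] [T2Space Y] {f : X → Y} {s : Set X} (hs : IsCompact s)
    (hf : ContinuousOn f s) (hi : InjOn f s) :
    ContinuousOn (Function.invFunOn f s) (f '' s) := by
  refine continuousOn_iff_isClosed.2 fun t ht => ⟨f '' (t ∩ s), ?_, ?_⟩
  · exact ((hs.inter_left ht).image_of_continuousOn (hf.mono inter_subset_right)).isClosed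
  · rw [inter_eq_self_of_subset_left (image_mono inter_subset_right)]
    exact hi.leftInvOn_invFunOn.image_inter'.symm

/-- A compact connected subset of the plane on which every nonvanishing continuous function has a
continuous logarithm; arcs and unions of two arcs with one common point are examples. -/
structure LogArc (A : Set ℂ) : Prop where
  isCompact : IsCompact A
  isPreconnected : IsPreconnected A
  hasLog : ∀ {F : ℂ → ℂ}, ContinuousOn F A → (∀ z ∈ A, F z ≠ 0) → HasLog A F

lemma logArc_image_Icc {f : ℝ → ℂ} {s t : ℝ} (hst : s ≤ t) (hf : ContinuousOn f (Icc s t))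
    (hi : InjOn f (Icc s t)) : LogArc (f '' Icc s t) where
  isCompact := isCompact_Icc.image_of_continuousOn hf
  isPreconnected := isPreconnected_Icc.image _ hf
  hasLog {F} hF hF0 := by
    obtain ⟨g, hg, hge⟩ := hasLog_Icc hst (hF.comp hf (mapsTo_image _ _))
      fun u hu => hF0 _ (mem_image_of_mem f hu)
    refine ⟨g ∘ Function.invFunOn f (Icc s t),
      hg.comp (continuousOn_invFunOn_image isCompact_Icc hf hi) ?_, ?_⟩
    · exact fun z hz => Function.invFunOn_mem hz
    · rintro _ ⟨u, hu, rfl⟩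
      simpa only [Function.comp_apply, hi.leftInvOn_invFunOn hu] using hge u hu

lemma exists_logArc_split {f : ℝ → ℂ} {s t : ℝ} (hf : ContinuousOn f (Icc s t))
    (hi : InjOn f (Icc s t)) {x : ℂ} (hx : x ∈ f '' Icc s t) :
    ∃ A' A'' : Set ℂ, LogArc A' ∧ LogArc A'' ∧ A' ∪ A'' = f '' Icc s t ∧ A' ∩ A'' = {x} ∧
      f s ∈ A' ∧ f t ∈ A'' := by
  obtain ⟨u, hu, rfl⟩ := hx
  have hleft : Icc s u ⊆ Icc s t := Icc_subset_Icc_right hu.2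
  have hright : Icc u t ⊆ Icc s t := Icc_subset_Icc_left hu.1
  refine ⟨f '' Icc s u, f '' Icc u t, logArc_image_Icc hu.1 (hf.mono hleft) (hi.mono hleft),
    logArc_image_Icc hu.2 (hf.mono hright) (hi.mono hright), ?_, ?_,
    mem_image_of_mem f (left_mem_Icc.2 hu.1), mem_image_of_mem f (right_mem_Icc.2 hu.2)⟩
  · rw [← image_union, Icc_union_Icc_eq_Icc hu.1 hu.2]
  · rw [← hi.image_inter hleft hright, Icc_inter_Icc_eq_singleton hu.1 hu.2, image_singleton]

/-- The variation from `a` to `b` of a continuous branch of `z ↦ log (z - p)` along `A`, with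
junk value `0` if there is no such branch. -/
def logVar (A : Set ℂ) (a b p : ℂ) : ℂ :=
  open Classical in if h : HasLog A fun z => z - p then h.choose b - h.choose a else 0

lemma logVar_swap (A : Set ℂ) (a b p : ℂ) : logVar A b a p = -logVar A a b p := by
  unfold logVar
  split_ifs <;> simp

namespace LogArc

variable {A B : Set ℂ} {a b c p : ℂ}

lemma union (hA : LogArc A) (hB : LogArc B) (hAB : A ∩ B = {c}) : LogArc (A ∪ B) where
  isCompact := hA.isCompact.union hB.isCompact
  isPreconnected :=
    have hc : c ∈ A ∩ B := hAB ▸ mem_singleton c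
    hA.isPreconnected.union c hc.1 hc.2 hB.isPreconnected
  hasLog hF hF0 :=
    (hA.hasLog (hF.mono subset_union_left) fun z hz => hF0 z (.inl hz)).union
      (hB.hasLog (hF.mono subset_union_right) fun z hz => hF0 z (.inr hz))
      hA.isCompact.isClosed hB.isCompact.isClosed (hAB ▸ subsingleton_singleton)

lemma sub_ne_zero_of_mem {z : ℂ} (hp : p ∉ A) (hz : z ∈ A) : z - p ≠ 0 :=
  sub_ne_zero.2 (ne_of_mem_of_not_mem hz hp)

lemma hasLog_sub (hA : LogArc A) (hp : p ∉ A) : HasLog A fun z => z - p :=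
  hA.hasLog (by fun_prop) fun _ => sub_ne_zero_of_mem hp

lemma logVar_eq (hA : LogArc A) (ha : a ∈ A) (hb : b ∈ A) {g : ℂ → ℂ} (hg : ContinuousOn g A)
    (hge : ∀ z ∈ A, exp (g z) = z - p) : logVar A a b p = g b - g a := by
  have h : HasLog A fun z => z - p := ⟨g, hg, hge⟩
  obtain ⟨hcont, hexp⟩ := h.choose_spec
  have hconst := eq_of_exp_eq_const (c := 1) hA.isPreconnected (hcont.sub hg)
    (fun z hz => by
      rw [Pi.sub_apply, exp_sub, hexp z hz]
      exact (div_eq_one_iff_eq (exp_ne_zero _)).2 (hge z hz).symm)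
    ha hb
  rw [Pi.sub_apply, Pi.sub_apply] at hconst
  rw [logVar, dif_pos h]
  linear_combination -hconst

lemma exp_logVar (hA : LogArc A) (ha : a ∈ A) (hb : b ∈ A) (hp : p ∉ A) :
    exp (logVar A a b p) = (b - p) / (a - p) := by
  obtain ⟨g, hg, hge⟩ := hA.hasLog_sub hp
  rw [hA.logVar_eq ha hb hg hge, exp_sub, hge a ha, hge b hb]

lemma logVar_mono (hB : LogArc B) (hA : LogArc A) (hAB : A ⊆ B) (ha : a ∈ A) (hb : b ∈ A)
    (hp : p ∉ B) : logVar A a b p = logVar B a b p := by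
  obtain ⟨g, hg, hge⟩ := hB.hasLog_sub hp
  rw [hB.logVar_eq (hAB ha) (hAB hb) hg hge,
    hA.logVar_eq ha hb (hg.mono hAB) fun z hz => hge z (hAB hz)]

lemma logVar_add (hA : LogArc A) (ha : a ∈ A) (hb : b ∈ A) (hc : c ∈ A) (hp : p ∉ A) :
    logVar A a b p + logVar A b c p = logVar A a c p := by
  obtain ⟨g, hg, hge⟩ := hA.hasLog_sub hp
  rw [hA.logVar_eq ha hb hg hge, hA.logVar_eq hb hc hg hge, hA.logVar_eq ha hc hg hge]
  ring

lemma logVar_eq_of_perturbation (hA : LogArc A) (ha : a ∈ A) (hb : b ∈ A) {g u : ℂ → ℂ}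
    (hg : ContinuousOn g A) (hu : ContinuousOn u A) (hu1 : ∀ z ∈ A, ‖u z‖ < 1)
    (hp : ∀ z ∈ A, z - p = exp (g z) * (1 - u z)) :
    logVar A a b p = (g b + log (1 - u b)) - (g a + log (1 - u a)) := by
  have hslit : ∀ z ∈ A, 1 - u z ∈ slitPlane := fun z hz => by
    rw [sub_eq_add_neg]
    exact mem_slitPlane_of_norm_lt_one ((norm_neg _).trans_lt (hu1 z hz))
  refine hA.logVar_eq ha hb (g := fun z => g z + log (1 - u z))
    (hg.add ((continuousOn_const.sub hu).clog hslit)) fun z hz => ?_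
  rw [exp_add, exp_log (slitPlane_ne_zero (hslit z hz)), hp z hz]

lemma continuousAt_logVar (hA : LogArc A) (ha : a ∈ A) (hb : b ∈ A) (hp : p ∉ A) :
    ContinuousAt (logVar A a b) p := by
  obtain ⟨g, hg, hge⟩ := hA.hasLog_sub hp
  obtain ⟨δ, hδ, hball⟩ := Metric.isOpen_iff.1 hA.isCompact.isClosed.isOpen_compl p hp
  have hfar : ∀ z ∈ A, δ ≤ ‖z - p‖ := fun z hz => by
    rw [← dist_eq_norm]
    exact not_lt.1 fun h => hball h hz
  have hne : ∀ z ∈ A, z - p ≠ 0 := fun _ => sub_ne_zero_of_mem hp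
  have hnear : ∀ᶠ q in 𝓝 p, logVar A a b q =
      (g b + log (1 - (q - p) / (b - p))) - (g a + log (1 - (q - p) / (a - p))) := by
    filter_upwards [Metric.ball_mem_nhds p hδ] with q hq
    refine hA.logVar_eq_of_perturbation (u := fun z => (q - p) / (z - p)) ha hb hg
      (continuousOn_const.div (by fun_prop) hne) (fun z hz => ?_) fun z hz => ?_
    · rw [norm_div, div_lt_one (norm_pos_iff.2 (hne z hz)), ← dist_eq_norm]
      exact (Metric.mem_ball.1 hq).trans_le (hfar z hz)
    · have := hne z hz
      rw [hge z hz]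
      field_simp
      ring
  have hlog : ∀ z, ContinuousAt (fun q => log (1 - (q - p) / (z - p))) p := fun z =>
    ContinuousAt.clog (by fun_prop) (by simp)
  exact ((continuousAt_const.add (hlog b)).sub (continuousAt_const.add (hlog a))).congr
    (hnear.mono fun q hq => hq.symm)

lemma logVar_of_norm_lt (hA : LogArc A) (ha : a ∈ A) (hb : b ∈ A) (hp : ∀ z ∈ A, ‖z‖ < ‖p‖) :
    logVar A a b p = log (1 - b / p) - log (1 - a / p) := by
  have hp0 : p ≠ 0 := norm_pos_iff.1 ((norm_nonneg a).trans_lt (hp a ha))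
  rw [hA.logVar_eq_of_perturbation (g := fun _ => log (-p)) (u := fun z => z / p) ha hb
    continuousOn_const (by fun_prop) (fun z hz => ?_) fun z _ => ?_]
  · ring
  · rw [norm_div, div_lt_one (norm_pos_iff.2 hp0)]
    exact hp z hz
  · rw [exp_log (neg_ne_zero.2 hp0)]
    field_simp
    ring

/-- The difference is a logarithm of `1`, hence cannot vary continuously. -/
lemma locallyConstantOff_logVar_sub (hA : LogArc A) (hB : LogArc B) (ha : a ∈ A ∩ B)
    (hb : b ∈ A ∩ B) :
    LocallyConstantOff (A ∪ B) fun p => logVar A a b p - logVar B a b p := by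
  intro p hp
  rw [mem_union, not_or] at hp
  refine eventually_eq_of_exp_eq_const (c := 1)
    ((hA.continuousAt_logVar ha.1 hb.1 hp.1).sub (hB.continuousAt_logVar ha.2 hb.2 hp.2)) ?_
  filter_upwards [hA.isCompact.isClosed.isOpen_compl.mem_nhds hp.1,
    hB.isCompact.isClosed.isOpen_compl.mem_nhds hp.2] with q hqA hqB
  rw [exp_sub, hA.exp_logVar ha.1 hb.1 hqA, hB.exp_logVar ha.2 hb.2 hqB]
  exact div_self (div_ne_zero (sub_ne_zero_of_mem hqA hb.1) (sub_ne_zero_of_mem hqA ha.1))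

end LogArc

end LogArc

/-! ### Jordan curves in the plane -/

section JordanPair

open Complex

/-- Two arcs from `a` to `b` with no further common points, so that their union is a closed curve.
Cutting the curve into just two arcs keeps the gluing of logarithms short. -/
structure JordanPair (A B : Set ℂ) (a b : ℂ) : Prop where
  left : LogArc A
  right : LogArc B
  inter_eq : A ∩ B = {a, b}
  ne : a ≠ b

/-- `2πi` times the winding number around `p` of the closed curve running from `a` to `b` along `A`
and back along `B`. -/
def wind (A B : Set ℂ) (a b p : ℂ) : ℂ := logVar A a b p - logVar B a b p

lemma isPreconnected_setOf_lt_norm {R : ℝ} (hR : 0 ≤ R) : IsPreconnected {z : ℂ | R < ‖z‖} := by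
  have himage : {z : ℂ | R < ‖z‖} =
      (fun q : ℝ × ℝ => (q.1 : ℂ) * exp (q.2 * I)) '' (Ioi R ×ˢ univ) := by
    ext z
    constructor
    · exact fun hz => ⟨(‖z‖, arg z), ⟨hz, mem_univ _⟩, norm_mul_exp_arg_mul_I z⟩
    · rintro ⟨⟨r, t⟩, ⟨hr, -⟩, rfl⟩
      have hr0 : 0 ≤ r := hR.trans (le_of_lt hr)
      simpa [norm_exp_ofReal_mul_I, abs_of_nonneg hr0] using hr
  rw [himage]
  exact (isPreconnected_Ioi.prod isPreconnected_univ).image _ (by fun_prop)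

lemma not_hasLog_compl_pair {a b : ℂ} (hab : a ≠ b) :
    ¬HasLog {a, b}ᶜ fun z => (b - z) / (a - z) := by
  rintro ⟨L, hL, hLe⟩
  have hd : 0 < ‖b - a‖ := norm_pos_iff.2 (sub_ne_zero.2 hab.symm)
  have hsphere : Metric.sphere a (‖b - a‖ / 2) ⊆ {a, b}ᶜ := by
    rintro z hz (rfl | rfl) <;> rw [mem_sphere_iff_norm] at hz
    · rw [sub_self, norm_zero] at hz
      linarith
    · linarith
  have hslit : ∀ z ∈ Metric.sphere a (‖b - a‖ / 2), 1 - (z - a) / (b - a) ∈ slitPlane := by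
    intro z hz
    rw [sub_eq_add_neg]
    refine mem_slitPlane_of_norm_lt_one ?_
    rw [norm_neg, norm_div, div_lt_one hd, mem_sphere_iff_norm.1 hz]
    exact half_lt_self hd
  have hlog : HasLog (Metric.sphere a (‖b - a‖ / 2)) fun z => (z - a) ^ (-1 : ℤ) := by
    refine ⟨fun z => L z - log (1 - (z - a) / (b - a)) - log (a - b),
      ((hL.mono hsphere).sub (ContinuousOn.clog (by fun_prop) hslit)).sub continuousOn_const,
      fun z hz => ?_⟩
    have hz' := not_or.1 (hsphere hz)
    have hza := sub_ne_zero.2 (Ne.symm hz'.1)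
    have hza' := sub_ne_zero.2 hz'.1
    have hzb := sub_ne_zero.2 (Ne.symm hz'.2)
    have hba := sub_ne_zero.2 hab.symm
    have hab' := sub_ne_zero.2 hab
    have hfactor : 1 - (z - a) / (b - a) = (b - z) / (b - a) := by
      field_simp
      ring
    rw [exp_sub, exp_sub, hLe z (hsphere hz), exp_log (slitPlane_ne_zero (hslit z hz)),
      exp_log hab', hfactor]
    simp only [zpow_neg_one]
    field_simp
    ring
  exact absurd (eq_zero_of_hasLog_zpow_sphere (half_pos hd) hlog) (by norm_num)

namespace JordanPair

variable {A B : Set ℂ} {a b p q x : ℂ}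

lemma left_mem (h : JordanPair A B a b) : a ∈ A ∩ B := h.inter_eq ▸ mem_insert a {b}

lemma right_mem (h : JordanPair A B a b) : b ∈ A ∩ B := h.inter_eq ▸ mem_insert_of_mem a rfl

lemma isCompact (h : JordanPair A B a b) : IsCompact (A ∪ B) :=
  h.left.isCompact.union h.right.isCompact

lemma isClosed (h : JordanPair A B a b) : IsClosed (A ∪ B) := h.isCompact.isClosed

lemma locallyConstantOff_wind (h : JordanPair A B a b) :
    LocallyConstantOff (A ∪ B) (wind A B a b) :=
  h.left.locallyConstantOff_logVar_sub h.right h.left_mem h.right_mem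

lemma exists_int_wind_eq (h : JordanPair A B a b) (hp : p ∉ A ∪ B) :
    ∃ k : ℤ, wind A B a b p = k * (2 * Real.pi * I) := by
  rw [mem_union, not_or] at hp
  rw [← exp_eq_one_iff, wind, exp_sub, h.left.exp_logVar h.left_mem.1 h.right_mem.1 hp.1,
    h.right.exp_logVar h.left_mem.2 h.right_mem.2 hp.2]
  exact div_self (div_ne_zero (LogArc.sub_ne_zero_of_mem hp.1 h.right_mem.1)
    (LogArc.sub_ne_zero_of_mem hp.1 h.left_mem.1))

lemma exists_wind_eq_zero_of_lt_norm (h : JordanPair A B a b) :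
    ∃ R : ℝ, 0 ≤ R ∧ ∀ p, R < ‖p‖ → p ∉ A ∪ B ∧ wind A B a b p = 0 := by
  obtain ⟨R, hR⟩ := h.isCompact.isBounded.exists_norm_le
  refine ⟨R, (norm_nonneg a).trans (hR a (.inl h.left_mem.1)), fun p hp => ?_⟩
  refine ⟨fun hpK => (hR p hpK).not_gt hp, ?_⟩
  rw [wind, h.left.logVar_of_norm_lt h.left_mem.1 h.right_mem.1
      fun z hz => (hR z (.inl hz)).trans_lt hp,
    h.right.logVar_of_norm_lt h.left_mem.2 h.right_mem.2
      fun z hz => (hR z (.inr hz)).trans_lt hp, sub_self]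

lemma isBounded_setOf_wind_ne_zero (h : JordanPair A B a b) :
    Bornology.IsBounded {p | p ∉ A ∪ B ∧ wind A B a b p ≠ 0} := by
  obtain ⟨R, -, hR⟩ := h.exists_wind_eq_zero_of_lt_norm
  refine (Metric.isBounded_closedBall (x := (0 : ℂ)) (r := R)).subset fun p hp => ?_
  rw [mem_closedBall_zero_iff]
  exact not_lt.1 fun hRp => hp.2 (hR p hRp).2

lemma hasLog_union (h : JordanPair A B a b) {F f g : ℂ → ℂ} (hf : ContinuousOn f A)
    (hfF : ∀ z ∈ A, exp (f z) = F z) (hg : ContinuousOn g B) (hgF : ∀ z ∈ B, exp (g z) = F z)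
    (hfg : f b - f a = g b - g a) : HasLog (A ∪ B) F := by
  have hshift : exp (f a - g a) = 1 := by
    rw [exp_sub, hfF a h.left_mem.1, ← hgF a h.left_mem.2, div_self (exp_ne_zero _)]
  refine hasLog_union_of_eqOn h.left.isCompact.isClosed h.right.isCompact.isClosed hf hfF
    (h := fun z => g z + (f a - g a)) (hg.add continuousOn_const) (fun z hz => ?_) ?_
  · rw [exp_add, hshift, mul_one, hgF z hz]
  · rw [h.inter_eq]
    rintro z (rfl | rfl)
    · simp
    · linear_combination hfg

lemma hasLog_zpow_mul_zpow (h : JordanPair A B a b) (hp : p ∉ A ∪ B) (hq : q ∉ A ∪ B) {m n : ℤ}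
    (hmn : m * wind A B a b p + n * wind A B a b q = 0) :
    HasLog (A ∪ B) fun z => (z - p) ^ m * (z - q) ^ n := by
  rw [mem_union, not_or] at hp hq
  obtain ⟨f, hf, hfe⟩ := h.left.hasLog_sub hp.1
  obtain ⟨f', hf', hfe'⟩ := h.left.hasLog_sub hq.1
  obtain ⟨g, hg, hge⟩ := h.right.hasLog_sub hp.2
  obtain ⟨g', hg', hge'⟩ := h.right.hasLog_sub hq.2
  have ha := h.left_mem
  have hb := h.right_mem
  rw [wind, wind, h.left.logVar_eq ha.1 hb.1 hf hfe, h.left.logVar_eq ha.1 hb.1 hf' hfe',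
    h.right.logVar_eq ha.2 hb.2 hg hge, h.right.logVar_eq ha.2 hb.2 hg' hge'] at hmn
  refine h.hasLog_union (f := fun z => m * f z + n * f' z) (g := fun z => m * g z + n * g' z)
    ((continuousOn_const.mul hf).add (continuousOn_const.mul hf')) (fun z hz => ?_)
    ((continuousOn_const.mul hg).add (continuousOn_const.mul hg')) (fun z hz => ?_)
    (by linear_combination hmn)
  · simp only [exp_add, exp_int_mul, hfe z hz, hfe' z hz]
  · simp only [exp_add, exp_int_mul, hge z hz, hge' z hz]

lemma eq_zero_of_isBounded_connectedComponentIn (h : JordanPair A B a b) (hp : p ∉ A ∪ B)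
    (hq : q ∉ A ∪ B) (hb : Bornology.IsBounded (connectedComponentIn (A ∪ B)ᶜ p))
    (hqp : q ∉ connectedComponentIn (A ∪ B)ᶜ p) {m n : ℤ}
    (hmn : m * wind A B a b p + n * wind A B a b q = 0) : m = 0 := by
  have hfr := frontier_connectedComponentIn_compl_subset h.isClosed p
  have hne : ∀ z ∈ closure (connectedComponentIn (A ∪ B)ᶜ p), z - q ≠ 0 := by
    rintro z hz hzq
    rw [sub_eq_zero.1 hzq, closure_eq_self_union_frontier] at hz
    exact hz.elim hqp fun hqf => hq (hfr hqf)
  exact eq_zero_of_hasLog_frontier h.isClosed.isOpen_compl.connectedComponentIn hb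
    (mem_connectedComponentIn hp) (ContinuousOn.zpow₀ (by fun_prop) n fun z hz => .inl (hne z hz))
    (fun z hz => zpow_ne_zero n (hne z hz)) ((h.hasLog_zpow_mul_zpow hp hq hmn).mono hfr)

lemma mem_connectedComponentIn_of_wind_ne_zero (h : JordanPair A B a b) (hp : p ∉ A ∪ B)
    (hq : q ∉ A ∪ B) (hpw : wind A B a b p ≠ 0) (hqw : wind A B a b q ≠ 0) :
    q ∈ connectedComponentIn (A ∪ B)ᶜ p := by
  by_contra hqp
  obtain ⟨m, hm⟩ := h.exists_int_wind_eq hp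
  obtain ⟨n, hn⟩ := h.exists_int_wind_eq hq
  have hb : Bornology.IsBounded (connectedComponentIn (A ∪ B)ᶜ p) :=
    h.isBounded_setOf_wind_ne_zero.subset fun x hx =>
      have hxp := h.locallyConstantOff_wind.connectedComponentIn_subset hp hx
      ⟨hxp.1, hxp.2 ▸ hpw⟩
  have hn0 : n = 0 := h.eq_zero_of_isBounded_connectedComponentIn hp hq hb hqp (n := -m) <| by
    rw [hm, hn]
    push_cast
    ring
  simp [hn0, hn] at hqw

lemma mem_connectedComponentIn_of_wind_eq_zero (h : JordanPair A B a b) (hp : p ∉ A ∪ B)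
    (hq : q ∉ A ∪ B) (hpw : wind A B a b p = 0) (hqw : wind A B a b q = 0) :
    q ∈ connectedComponentIn (A ∪ B)ᶜ p := by
  obtain ⟨R, hR0, hR⟩ := h.exists_wind_eq_zero_of_lt_norm
  have hunbounded : ∀ r ∉ A ∪ B, wind A B a b r = 0 →
      ∃ x ∈ connectedComponentIn (A ∪ B)ᶜ r, R < ‖x‖ := by
    intro r hr hrw
    by_contra! hle
    have hb : Bornology.IsBounded (connectedComponentIn (A ∪ B)ᶜ r) :=
      (Metric.isBounded_closedBall (x := (0 : ℂ)) (r := R)).subset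
        fun x hx => mem_closedBall_zero_iff.2 (hle x hx)
    have hfar : R < ‖((R + 1 : ℝ) : ℂ)‖ := by
      rw [norm_real]
      exact (lt_add_one R).trans_le (le_abs_self _)
    exact one_ne_zero <| h.eq_zero_of_isBounded_connectedComponentIn hr (hR _ hfar).1 hb
      (fun hmem => (hle _ hmem).not_gt hfar) (m := 1) (n := 0) (by simp [hrw])
  obtain ⟨x, hx, hRx⟩ := hunbounded p hp hpw
  obtain ⟨y, hy, hRy⟩ := hunbounded q hq hqw
  have hyp : y ∈ connectedComponentIn (A ∪ B)ᶜ p := by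
    rw [connectedComponentIn_eq hx]
    exact (isPreconnected_setOf_lt_norm hR0).subset_connectedComponentIn hRx
      (fun z hz => (hR z hz).1) hRy
  rw [connectedComponentIn_eq hyp, ← connectedComponentIn_eq hy]
  exact mem_connectedComponentIn hq

lemma isPreconnected_setOf_wind_eq (h : JordanPair A B a b) (v : ℂ) :
    IsPreconnected {p | p ∉ A ∪ B ∧ wind A B a b p = v} := by
  refine isPreconnected_of_forall_pair fun p ⟨hp, hpv⟩ q ⟨hq, hqv⟩ =>
    ⟨connectedComponentIn (A ∪ B)ᶜ p, ?_, mem_connectedComponentIn hp, ?_,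
      isPreconnected_connectedComponentIn⟩
  · exact hpv ▸ h.locallyConstantOff_wind.connectedComponentIn_subset hp
  · by_cases hv : v = 0
    · exact h.mem_connectedComponentIn_of_wind_eq_zero hp hq (hpv.trans hv) (hqv.trans hv)
    · exact h.mem_connectedComponentIn_of_wind_ne_zero hp hq (hpv ▸ hv) (hqv ▸ hv)

lemma wind_eq_of_ne_zero (h : JordanPair A B a b) (hp : p ∉ A ∪ B) (hq : q ∉ A ∪ B)
    (hpw : wind A B a b p ≠ 0) (hqw : wind A B a b q ≠ 0) : wind A B a b q = wind A B a b p :=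
  (h.locallyConstantOff_wind.connectedComponentIn_subset hp
    (h.mem_connectedComponentIn_of_wind_ne_zero hp hq hpw hqw)).2

lemma hasLog_compl_pair_of_wind_eq_zero (h : JordanPair A B a b)
    (hzero : ∀ p ∉ A ∪ B, wind A B a b p = 0) :
    HasLog {a, b}ᶜ fun z => (b - z) / (a - z) := by
  classical
  rw [← h.inter_eq, compl_inter]
  set L : ℂ → ℂ := Aᶜ.piecewise (logVar A a b) (logVar B a b)
  have hLA : EqOn L (logVar A a b) Aᶜ := piecewise_eqOn _ _ _
  have hLB : EqOn L (logVar B a b) Bᶜ := fun z hzB => by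
    by_cases hzA : z ∈ A
    · exact piecewise_eq_of_notMem _ _ _ (not_not.2 hzA)
    · rw [hLA hzA]
      exact sub_eq_zero.1 (hzero z (not_or.2 ⟨hzA, hzB⟩))
  refine ⟨L, ?_, ?_⟩
  · refine ContinuousOn.union_of_isOpen (ContinuousOn.congr ?_ hLA) (ContinuousOn.congr ?_ hLB)
      h.left.isCompact.isClosed.isOpen_compl h.right.isCompact.isClosed.isOpen_compl
    · exact continuousOn_of_forall_continuousAt fun z hz =>
        h.left.continuousAt_logVar h.left_mem.1 h.right_mem.1 hz
    · exact continuousOn_of_forall_continuousAt fun z hz =>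
        h.right.continuousAt_logVar h.left_mem.2 h.right_mem.2 hz
  · rintro z (hz | hz)
    · rw [hLA hz, h.left.exp_logVar h.left_mem.1 h.right_mem.1 hz]
    · rw [hLB hz, h.right.exp_logVar h.left_mem.2 h.right_mem.2 hz]

lemma exists_wind_ne_zero (h : JordanPair A B a b) : ∃ p ∉ A ∪ B, wind A B a b p ≠ 0 := by
  by_contra! hzero
  exact not_hasLog_compl_pair h.ne (h.hasLog_compl_pair_of_wind_eq_zero hzero)

lemma mem_frontier_of_isBounded (h : JordanPair A B a b) {A' A'' : Set ℂ} (hA' : LogArc A')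
    (hA'' : LogArc A'') (hA : A' ∪ A'' = A) (hx : A' ∩ A'' = {x}) (ha : a ∈ A') (hb : b ∈ A'')
    (hxa : x ≠ a) (hxb : x ≠ b) {Ω : Set ℂ} (hΩ : IsOpen Ω) (hΩb : Bornology.IsBounded Ω)
    (hfr : frontier Ω ⊆ A ∪ B) (hpΩ : p ∈ Ω) (hp : p ∉ A ∪ B) : x ∈ frontier Ω := by
  by_contra hxf
  have hA'A : A' ⊆ A := hA ▸ subset_union_left
  have hA''A : A'' ⊆ A := hA ▸ subset_union_right
  have ha' : a ∉ A'' := fun ha'' => hxa (hx.subset ⟨ha, ha''⟩).symm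
  have hb' : b ∉ A' := fun hb' => hxb (hx.subset ⟨hb', hb⟩).symm
  rw [mem_union, not_or] at hp
  have hlog : ∀ C, LogArc C → p ∉ C → HasLog (C ∩ frontier Ω) fun z => z - p :=
    fun C hC hpC => (hC.hasLog_sub hpC).mono inter_subset_left
  have hclosed : ∀ C, LogArc C → IsClosed (C ∩ frontier Ω) :=
    fun C hC => hC.isCompact.isClosed.inter isClosed_frontier
  have hA'B := (hlog A' hA' fun h => hp.1 (hA'A h)).union (hlog B h.right hp.2)
    (hclosed A' hA') (hclosed B h.right) <| by
      rintro z ⟨⟨hz, -⟩, hzB, -⟩ w ⟨⟨hw, -⟩, hwB, -⟩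
      have hsub : ∀ y ∈ A', y ∈ B → y = a := fun y hy hyB =>
        (h.inter_eq.subset ⟨hA'A hy, hyB⟩).resolve_right fun hyb => hb' (hyb ▸ hy)
      rw [hsub z hz hzB, hsub w hw hwB]
  have hAB := hA'B.union (hlog A'' hA'' fun h => hp.1 (hA''A h))
    ((hclosed A' hA').union (hclosed B h.right)) (hclosed A'' hA'') <| by
      have hsub : ∀ y ∈ (A' ∩ frontier Ω ∪ B ∩ frontier Ω) ∩ (A'' ∩ frontier Ω), y = b := by
        rintro y ⟨⟨hy, hyf⟩ | ⟨hy, -⟩, hyA'', -⟩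
        · exact absurd ((hx.subset ⟨hy, hyA''⟩ : y = x) ▸ hyf) hxf
        · exact (h.inter_eq.subset ⟨hA''A hyA'', hy⟩).resolve_left fun hya => ha' (hya ▸ hyA'')
      exact fun z hz w hw => (hsub z hz).trans (hsub w hw).symm
  refine one_ne_zero (eq_zero_of_hasLog_frontier hΩ hΩb hpΩ (H := fun _ => 1) (m := 1)
    continuousOn_const (fun _ _ => one_ne_zero) ?_)
  simp only [zpow_one, mul_one]
  refine hAB.mono fun z hz => ?_
  rcases hfr hz with hzA | hzB
  · rw [← hA] at hzA
    exact hzA.imp (fun hz' => .inl ⟨hz', hz⟩) fun hz'' => ⟨hz'', hz⟩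
  · exact .inl (.inr ⟨hzB, hz⟩)

lemma mem_closure_setOf_wind (h : JordanPair A B a b) {A' A'' : Set ℂ} (hA' : LogArc A')
    (hA'' : LogArc A'') (hA : A' ∪ A'' = A) (hx : A' ∩ A'' = {x}) (ha : a ∈ A') (hb : b ∈ A'')
    (hxa : x ≠ a) (hxb : x ≠ b) :
    x ∈ closure {p | p ∉ A ∪ B ∧ wind A B a b p ≠ 0} ∧
      x ∈ closure {p | p ∉ A ∪ B ∧ wind A B a b p = 0} := by
  obtain ⟨p, hp, hpw⟩ := h.exists_wind_ne_zero
  have hlc := h.locallyConstantOff_wind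
  have hinside_open := hlc.isOpen_setOf h.isClosed (· ≠ 0)
  have hinside_fr := hlc.frontier_setOf_subset h.isClosed (· ≠ 0)
  have houtside_fr := hlc.frontier_setOf_subset h.isClosed (· = 0)
  set inside := {p | p ∉ A ∪ B ∧ wind A B a b p ≠ 0}
  set outside := {p | p ∉ A ∪ B ∧ wind A B a b p = 0}
  constructor
  · exact frontier_subset_closure (h.mem_frontier_of_isBounded hA' hA'' hA hx ha hb hxa hxb
      hinside_open h.isBounded_setOf_wind_ne_zero hinside_fr ⟨hp, hpw⟩ hp)
  · have hfr : frontier (closure outside)ᶜ ⊆ frontier outside := by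
      rw [frontier_compl]
      exact frontier_closure_subset
    refine frontier_subset_closure (hfr (h.mem_frontier_of_isBounded hA' hA'' hA hx ha hb hxa hxb
      isClosed_closure.isOpen_compl ?_ (hfr.trans houtside_fr) (fun hmem => ?_) hp))
    · obtain ⟨R, -, hR⟩ := h.exists_wind_eq_zero_of_lt_norm
      refine (Metric.isBounded_closedBall (x := (0 : ℂ)) (r := R)).subset fun q hq => ?_
      rw [mem_closedBall_zero_iff]
      exact not_lt.1 fun hRq => hq (subset_closure (hR q hRq))
    · obtain ⟨q, hq, hq'⟩ := mem_closure_iff.1 hmem _ hinside_open ⟨hp, hpw⟩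
      exact hq.2 hq'.2

end JordanPair

end JordanPair

/-! ### Stereographic projection from a point avoided by the drawing -/

section SphereChart

open Complex Filter Bornology

/-- Stereographic projection of the sphere from `N` onto the complex plane. -/
def sphereChart (N : SpherePt) : OpenPartialHomeomorph SpherePt ℂ :=
  have : Fact (Module.finrank ℝ (EuclideanSpace ℝ (Fin 3)) = 2 + 1) := ⟨by simp⟩
  (stereographic' 2 N).transHomeomorph orthonormalBasisOneI.repr.symm.toHomeomorph

variable {N z : SpherePt}

lemma sphereChart_source (N : SpherePt) : (sphereChart N).source = {N}ᶜ :=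
  have : Fact (Module.finrank ℝ (EuclideanSpace ℝ (Fin 3)) = 2 + 1) := ⟨by simp⟩
  stereographic'_source N

lemma sphereChart_target (N : SpherePt) : (sphereChart N).target = univ := by
  have : Fact (Module.finrank ℝ (EuclideanSpace ℝ (Fin 3)) = 2 + 1) := ⟨by simp⟩
  change _ ⁻¹' (stereographic' 2 N).target = univ
  rw [stereographic'_target, preimage_univ]

lemma continuousOn_sphereChart (N : SpherePt) : ContinuousOn (sphereChart N) {N}ᶜ :=
  sphereChart_source N ▸ (sphereChart N).continuousOn

lemma continuous_sphereChart_symm (N : SpherePt) : Continuous (sphereChart N).symm :=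
  continuousOn_univ.1 (sphereChart_target N ▸ (sphereChart N).continuousOn_symm)

lemma sphereChart_symm_apply (hz : z ≠ N) : (sphereChart N).symm (sphereChart N z) = z :=
  (sphereChart N).left_inv (sphereChart_source N ▸ hz)

lemma sphereChart_apply_symm (N : SpherePt) (w : ℂ) :
    sphereChart N ((sphereChart N).symm w) = w :=
  (sphereChart N).right_inv (sphereChart_target N ▸ mem_univ w)

lemma sphereChart_symm_ne (N : SpherePt) (w : ℂ) : (sphereChart N).symm w ≠ N := by
  have hw := (sphereChart N).map_target (x := w) (sphereChart_target N ▸ mem_univ w)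
  rwa [sphereChart_source] at hw

lemma injOn_sphereChart (N : SpherePt) : InjOn (sphereChart N) {N}ᶜ :=
  sphereChart_source N ▸ (sphereChart N).injOn

lemma sphereChart_mem_image_iff {K : Set SpherePt} (hK : N ∉ K) (hz : z ≠ N) :
    sphereChart N z ∈ sphereChart N '' K ↔ z ∈ K :=
  (injOn_sphereChart N).mem_image_iff (subset_compl_singleton_iff.2 hK) hz

lemma tendsto_sphereChart (N : SpherePt) :
    Tendsto (sphereChart N) (𝓝[≠] N) (cobounded ℂ) := by
  refine tendsto_norm_atTop_iff_cobounded.1 (tendsto_atTop.2 fun R => ?_)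
  have hcompact : IsCompact ((sphereChart N).symm '' Metric.closedBall 0 R) :=
    (isCompact_closedBall 0 R).image (continuous_sphereChart_symm N)
  have hN : N ∉ (sphereChart N).symm '' Metric.closedBall 0 R := fun ⟨w, _, hw⟩ =>
    sphereChart_symm_ne N w hw
  filter_upwards [self_mem_nhdsWithin,
    mem_nhdsWithin_of_mem_nhds (hcompact.isClosed.isOpen_compl.mem_nhds hN)] with z hz hzR
  by_contra! hlt
  exact hzR ⟨sphereChart N z, by simpa using hlt.le, sphereChart_symm_apply hz⟩

lemma tendsto_sphereChart_symm (N : SpherePt) :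
    Tendsto (sphereChart N).symm (cobounded ℂ) (𝓝 N) := by
  refine tendsto_def.2 fun U hU => ?_
  obtain ⟨V, hVU, hV, hNV⟩ := mem_nhds_iff.1 hU
  have hcompact : IsCompact (sphereChart N '' Vᶜ) :=
    hV.isClosed_compl.isCompact.image_of_continuousOn
      ((continuousOn_sphereChart N).mono (compl_subset_compl.2 (singleton_subset_iff.2 hNV)))
  filter_upwards [isBounded_def.1 hcompact.isBounded] with w hw
  by_contra hwU
  exact hw ⟨(sphereChart N).symm w, fun hwV => hwU (hVU hwV), sphereChart_apply_symm N w⟩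

lemma not_injOn_sphere {c : ℂ} {r : ℝ} (hr : 0 < r) {f : ℂ → ℝ}
    (hf : ContinuousOn f (Metric.sphere c r)) : ¬InjOn f (Metric.sphere c r) := by
  intro hi
  have hmem : ∀ θ, circleMap c r θ ∈ Metric.sphere c r := circleMap_mem_sphere c hr.le
  set g : ℝ → ℝ := fun θ => f (circleMap c r (θ + Real.pi)) - f (circleMap c r θ) with hg
  have hfc : Continuous fun θ => f (circleMap c r θ) :=
    hf.comp_continuous (continuous_circleMap c r) hmem
  have hgc : Continuous g := (hfc.comp (continuous_add_const Real.pi)).sub hfc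
  have hgpi : g Real.pi = -g 0 := by
    have hper := periodic_circleMap c r 0
    simp only [hg, zero_add, neg_sub, ← two_mul] at hper ⊢
    rw [hper]
  obtain ⟨θ, hθ⟩ : ∃ θ, g θ = 0 := by
    rcases le_total (g 0) 0 with h0 | h0
    · exact mem_range_of_exists_le_of_exists_ge hgc ⟨0, h0⟩ ⟨Real.pi, by linarith⟩
    · exact mem_range_of_exists_le_of_exists_ge hgc ⟨Real.pi, by linarith⟩ ⟨0, h0⟩
  have heq := hi (hmem _) (hmem _) (sub_eq_zero.1 hθ)
  have hlt : |θ + Real.pi - θ| < 2 * Real.pi := by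
    rw [add_sub_cancel_left, abs_of_pos Real.pi_pos]
    linarith [Real.pi_pos]
  linarith [eq_of_circleMap_eq hr.ne' hlt heq, Real.pi_pos]

lemma interior_eq_empty_of_injOn {S : Set ℂ} {f : ℂ → ℝ} (hf : ContinuousOn f S)
    (hi : InjOn f S) : interior S = ∅ := by
  by_contra hne
  obtain ⟨c, hc⟩ := nonempty_iff_ne_empty.2 hne
  obtain ⟨r, hr, hball⟩ := Metric.nhds_basis_closedBall.mem_iff.1 (mem_interior_iff_mem_nhds.1 hc)
  have hsphere := Metric.sphere_subset_closedBall.trans hball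
  exact not_injOn_sphere hr (hf.mono hsphere) (hi.mono hsphere)

end SphereChart

namespace GoodDrawing

variable {n : ℕ}

/-- No edge of the drawing passes through `N`, so that the whole drawing can be projected to the
plane from `N`. -/
def Avoids (D : GoodDrawing n SpherePt) (N : SpherePt) : Prop :=
  ∀ u v, u ≠ v → N ∉ D.arc u v

lemma dense_compl_preimage_arc (D : GoodDrawing n SpherePt) (N : SpherePt) {u v : Fin n}
    (huv : u ≠ v) : IsOpen ((sphereChart N).symm ⁻¹' D.arc u v)ᶜ ∧
      Dense ((sphereChart N).symm ⁻¹' D.arc u v)ᶜ := by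
  obtain ⟨f, hf, hi, -, -, harc⟩ := D.isArc u v huv
  have hcont := continuous_sphereChart_symm N
  rw [harc, ← interior_eq_empty_iff_dense_compl]
  refine ⟨((isCompact_Icc.image_of_continuousOn hf).isClosed.preimage hcont).isOpen_compl, ?_⟩
  refine interior_eq_empty_of_injOn (f := Function.invFunOn f (Icc 0 1) ∘ (sphereChart N).symm)
    ((continuousOn_invFunOn_image isCompact_Icc hf hi).comp hcont.continuousOn
      (mapsTo_preimage _ _)) fun w hw w' hw' hww' => ?_
  have hpt : (sphereChart N).symm w = (sphereChart N).symm w' := by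
    rw [← Function.invFunOn_eq hw, ← Function.invFunOn_eq hw']
    exact congrArg f hww'
  rw [← sphereChart_apply_symm N w, hpt, sphereChart_apply_symm]

lemma exists_avoids (D : GoodDrawing n SpherePt) : ∃ N, D.Avoids N := by
  obtain ⟨N₀⟩ : Nonempty SpherePt := ⟨⟨EuclideanSpace.single 0 1, by simp⟩⟩
  have hdense : Dense (⋂ e : {e : Fin n × Fin n // e.1 ≠ e.2},
      ((sphereChart N₀).symm ⁻¹' D.arc e.1.1 e.1.2)ᶜ) :=
    dense_iInter_of_isOpen (fun e => (D.dense_compl_preimage_arc N₀ e.2).1)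
      fun e => (D.dense_compl_preimage_arc N₀ e.2).2
  obtain ⟨w, hw⟩ := hdense.nonempty
  exact ⟨(sphereChart N₀).symm w, fun u v huv => mem_iInter.1 hw ⟨(u, v), huv⟩⟩

end GoodDrawing

/-! ### Winding numbers on the sphere -/

section SphereWind

open Filter Bornology

/-- The winding number, in the sense of `wind`, of a closed curve on the sphere around `z`, seen
in stereographic projection from `N`; it is `0` at `N` itself. -/
def sphereWind (N : SpherePt) (A B : Set SpherePt) (a b z : SpherePt) : ℂ :=
  open Classical in
  if z = N then 0 else wind (sphereChart N '' A) (sphereChart N '' B) (sphereChart N a)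
    (sphereChart N b) (sphereChart N z)

/-- The sets `A` and `B` avoid `N`, and their stereographic projections from `N` are two arcs
forming a simple closed curve. -/
structure SphereJordanPair (N : SpherePt) (A B : Set SpherePt) (a b : SpherePt) : Prop where
  jordanPair : JordanPair (sphereChart N '' A) (sphereChart N '' B) (sphereChart N a)
    (sphereChart N b)
  notMem : N ∉ A ∪ B

variable {N : SpherePt} {A B : Set SpherePt} {a b x z : SpherePt}

lemma sphereWind_self : sphereWind N A B a b N = 0 := if_pos rfl

lemma sphereWind_of_ne (hz : z ≠ N) : sphereWind N A B a b z =
    wind (sphereChart N '' A) (sphereChart N '' B) (sphereChart N a) (sphereChart N b)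
      (sphereChart N z) :=
  if_neg hz

lemma sphereWind_symm_apply (w : ℂ) : sphereWind N A B a b ((sphereChart N).symm w) =
    wind (sphereChart N '' A) (sphereChart N '' B) (sphereChart N a) (sphereChart N b) w := by
  rw [sphereWind_of_ne (sphereChart_symm_ne N w), sphereChart_apply_symm]

namespace SphereJordanPair

lemma sphereChart_mem_iff (h : SphereJordanPair N A B a b) (hz : z ≠ N) :
    sphereChart N z ∈ sphereChart N '' A ∪ sphereChart N '' B ↔ z ∈ A ∪ B := by
  rw [← image_union, sphereChart_mem_image_iff h.notMem hz]

lemma symm_mem_iff (h : SphereJordanPair N A B a b) {w : ℂ} :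
    (sphereChart N).symm w ∈ A ∪ B ↔ w ∈ sphereChart N '' A ∪ sphereChart N '' B := by
  rw [← h.sphereChart_mem_iff (sphereChart_symm_ne N w), sphereChart_apply_symm]

lemma eventually_cobounded (h : SphereJordanPair N A B a b) :
    ∀ᶠ w in cobounded ℂ, (sphereChart N).symm w ∉ A ∪ B ∧
      sphereWind N A B a b ((sphereChart N).symm w) = 0 := by
  obtain ⟨R, -, hR⟩ := h.jordanPair.exists_wind_eq_zero_of_lt_norm
  filter_upwards [tendsto_norm_cobounded_atTop.eventually_gt_atTop R] with w hw
  rw [h.symm_mem_iff, sphereWind_symm_apply]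
  exact hR w hw

lemma eventually_sphereWind_eq_zero (h : SphereJordanPair N A B a b) :
    ∀ᶠ z in 𝓝 N, sphereWind N A B a b z = 0 := by
  rw [← nhdsNE_sup_pure, eventually_sup]
  refine ⟨?_, sphereWind_self⟩
  filter_upwards [(tendsto_sphereChart N).eventually h.eventually_cobounded,
    self_mem_nhdsWithin] with z hz hzN
  rw [← sphereChart_symm_apply hzN]
  exact hz.2

lemma locallyConstantOff_sphereWind (h : SphereJordanPair N A B a b) :
    LocallyConstantOff (A ∪ B) (sphereWind N A B a b) := by
  intro z hz
  rcases eq_or_ne z N with rfl | hzN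
  · filter_upwards [h.eventually_sphereWind_eq_zero] with q hq
    rw [hq, sphereWind_self]
  · have hnhds := isOpen_compl_singleton.mem_nhds hzN
    have hloc := h.jordanPair.locallyConstantOff_wind _ (mt (h.sphereChart_mem_iff hzN).1 hz)
    filter_upwards [((continuousOn_sphereChart N).continuousAt hnhds).eventually hloc, hnhds]
      with q hq hqN
    rw [sphereWind_of_ne hqN, sphereWind_of_ne hzN, hq]

lemma isPreconnected_setOf_sphereWind_eq (h : SphereJordanPair N A B a b) (v : ℂ) :
    IsPreconnected {z | z ∉ A ∪ B ∧ sphereWind N A B a b z = v} := by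
  refine ((h.jordanPair.isPreconnected_setOf_wind_eq v).image _
    (continuous_sphereChart_symm N).continuousOn).subset_closure ?_ ?_
  · rintro _ ⟨w, ⟨hw, hwv⟩, rfl⟩
    exact ⟨mt h.symm_mem_iff.1 hw, (sphereWind_symm_apply w).trans hwv⟩
  · rintro z ⟨hz, hzv⟩
    rcases eq_or_ne z N with rfl | hzN
    · refine mem_closure_of_tendsto (tendsto_sphereChart_symm z) ?_
      filter_upwards [h.eventually_cobounded] with w hw
      rw [h.symm_mem_iff, sphereWind_symm_apply] at hw
      exact mem_image_of_mem _ ⟨hw.1, hw.2.trans (sphereWind_self.symm.trans hzv)⟩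
    · refine subset_closure ⟨sphereChart N z, ⟨mt (h.sphereChart_mem_iff hzN).1 hz, ?_⟩,
        sphereChart_symm_apply hzN⟩
      rw [← hzv, sphereWind_of_ne hzN]

lemma exists_forall_sphereWind_eq (h : SphereJordanPair N A B a b) :
    ∃ v ≠ 0, ∀ z ∉ A ∪ B, sphereWind N A B a b z = 0 ∨ sphereWind N A B a b z = v := by
  obtain ⟨w, hw, hw0⟩ := h.jordanPair.exists_wind_ne_zero
  refine ⟨_, hw0, fun z hz => or_iff_not_imp_left.2 fun hz0 => ?_⟩
  have hzN : z ≠ N := fun hzN => hz0 (hzN ▸ sphereWind_self)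
  rw [sphereWind_of_ne hzN] at hz0 ⊢
  exact h.jordanPair.wind_eq_of_ne_zero hw (mt (h.sphereChart_mem_iff hzN).1 hz) hw0 hz0

lemma mem_closure_of_chart (h : SphereJordanPair N A B a b) {P : ℂ → Prop} (hx : x ≠ N)
    (hcl : sphereChart N x ∈ closure {w | w ∉ sphereChart N '' A ∪ sphereChart N '' B ∧
      P (wind (sphereChart N '' A) (sphereChart N '' B) (sphereChart N a) (sphereChart N b) w)}) :
    x ∈ closure {z | z ∉ A ∪ B ∧ P (sphereWind N A B a b z)} := by
  rw [← sphereChart_symm_apply hx]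
  refine map_mem_closure (continuous_sphereChart_symm N) hcl fun w hw => ?_
  refine ⟨mt h.symm_mem_iff.1 hw.1, ?_⟩
  simpa only [sphereWind_symm_apply] using hw.2

end SphereJordanPair

end SphereWind

/-! ### Winding numbers of drawn triangles -/

section TriWind

open Filter

/-- Three pairwise distinct elements. -/
structure Distinct {α : Type*} (a b c : α) : Prop where
  left : a ≠ b
  outer : a ≠ c
  right : b ≠ c

namespace Distinct

variable {α : Type*} {a b c : α}

lemma swap_left (h : Distinct a b c) : Distinct b a c := ⟨h.left.symm, h.right, h.outer⟩

lemma swap_right (h : Distinct a b c) : Distinct a c b := ⟨h.outer, h.left, h.right.symm⟩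

lemma map {β : Type*} (h : Distinct a b c) {f : α → β} (hf : f.Injective) :
    Distinct (f a) (f b) (f c) :=
  ⟨hf.ne h.left, hf.ne h.outer, hf.ne h.right⟩

end Distinct

lemma logVar_union {A B : Set ℂ} {a b c p : ℂ} (hA : LogArc A) (hB : LogArc B)
    (hAB : A ∩ B = {c}) (ha : a ∈ A) (hb : b ∈ B) (hp : p ∉ A ∪ B) :
    logVar (A ∪ B) a b p = logVar A a c p + logVar B c b p := by
  have hAuB := hA.union hB hAB
  have hc : c ∈ A ∩ B := hAB ▸ mem_singleton c
  rw [hAuB.logVar_mono hA subset_union_left ha hc.1 hp,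
    hAuB.logVar_mono hB subset_union_right hc.2 hb hp,
    hAuB.logVar_add (.inl ha) (.inl hc.1) (.inr hb) hp]

namespace GoodDrawing

variable {n : ℕ} {D : GoodDrawing n SpherePt} {N : SpherePt} {a b c d u v : Fin n} {x : SpherePt}

lemma vtx_left_mem_arc (D : GoodDrawing n SpherePt) (huv : u ≠ v) : D.vtx u ∈ D.arc u v := by
  obtain ⟨f, -, -, h0, -, harc⟩ := D.isArc u v huv
  rw [harc, ← h0]
  exact mem_image_of_mem f unitInterval.zero_mem

lemma vtx_right_mem_arc (D : GoodDrawing n SpherePt) (huv : u ≠ v) : D.vtx v ∈ D.arc u v :=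
  D.arc_symm v u ▸ D.vtx_left_mem_arc huv.symm

lemma isClosed_arc (D : GoodDrawing n SpherePt) (huv : u ≠ v) : IsClosed (D.arc u v) := by
  obtain ⟨f, hf, -, -, -, harc⟩ := D.isArc u v huv
  rw [harc]
  exact (isCompact_Icc.image_of_continuousOn hf).isClosed

lemma isClosed_tri (D : GoodDrawing n SpherePt) (h : Distinct a b c) : IsClosed (D.tri a b c) :=
  ((D.isClosed_arc h.left).union (D.isClosed_arc h.right)).union (D.isClosed_arc h.outer)

lemma tri_swap_left (D : GoodDrawing n SpherePt) (a b c : Fin n) : D.tri b a c = D.tri a b c := by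
  rw [tri, tri, D.arc_symm b a, union_right_comm]

lemma tri_swap_right (D : GoodDrawing n SpherePt) (a b c : Fin n) :
    D.tri a c b = D.tri a b c := by
  rw [tri, tri, D.arc_symm c b, union_assoc, union_assoc, union_comm, union_assoc,
    union_comm (D.arc a b), union_comm (D.arc a b), union_assoc]

lemma arc_union_arc_union_arc (D : GoodDrawing n SpherePt) (a b c : Fin n) :
    D.arc a b ∪ (D.arc a c ∪ D.arc c b) = D.tri a b c := by
  rw [tri, D.arc_symm c b, union_assoc, union_comm (D.arc a c)]

lemma vtx_notMem_tri_s16 {e : Fin n} (h : Distinct a b c) (ha : e ≠ a) (hb : e ≠ b) (hc : e ≠ c) :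
    D.vtx e ∉ D.tri a b c := by
  rintro ((he | he) | he)
  · exact D.vtx_not_mem _ _ _ h.left ha hb he
  · exact D.vtx_not_mem _ _ _ h.right hb hc he
  · exact D.vtx_not_mem _ _ _ h.outer ha hc he

/-- The edge-arc between two vertices, without its end points. -/
def openArc (D : GoodDrawing n SpherePt) (u v : Fin n) : Set SpherePt :=
  D.arc u v \ {D.vtx u, D.vtx v}

lemma vtx_mem_closure_openArc (D : GoodDrawing n SpherePt) (huv : u ≠ v) :
    D.vtx u ∈ closure (D.openArc u v) := by
  obtain ⟨f, hf, hi, h0, h1, harc⟩ := D.isArc u v huv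
  have h0mem : (0 : ℝ) ∈ Icc (0 : ℝ) 1 := unitInterval.zero_mem
  have h1mem : (1 : ℝ) ∈ Icc (0 : ℝ) 1 := unitInterval.one_mem
  have h0cl : (0 : ℝ) ∈ closure (Ioo (0 : ℝ) 1) := by rwa [closure_Ioo zero_ne_one]
  have hcont := (hf 0 h0mem).mono Ioo_subset_Icc_self
  rw [← h0]
  refine hcont.mem_closure h0cl fun t ht => ?_
  have htI := Ioo_subset_Icc_self ht
  refine ⟨harc ▸ mem_image_of_mem f htI, ?_⟩
  rintro (hu | hv)
  · exact ht.1.ne' (hi htI h0mem (hu.trans h0.symm))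
  · exact ht.2.ne (hi htI h1mem (hv.trans h1.symm))

lemma openArc_nonempty (D : GoodDrawing n SpherePt) (huv : u ≠ v) : (D.openArc u v).Nonempty :=
  closure_nonempty_iff.1 ⟨_, D.vtx_mem_closure_openArc huv⟩

lemma notMem_of_mem_openArc (h : Distinct a b c) (hx : x ∈ D.openArc a b) :
    x ∉ D.arc a c ∪ D.arc c b := by
  rintro (hxc | hxc)
  · exact hx.2 (.inl ((D.adj_arcs a b c h.left h.outer h.right).subset ⟨hx.1, hxc⟩))
  · have hinter := D.adj_arcs b a c h.left.symm h.right h.outer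
    rw [D.arc_symm b a, D.arc_symm b c] at hinter
    exact hx.2 (.inr (hinter.subset ⟨hx.1, hxc⟩))

namespace Avoids

lemma vtx_ne (hN : D.Avoids N) (huv : u ≠ v) : D.vtx u ≠ N :=
  ne_of_mem_of_not_mem (D.vtx_left_mem_arc huv) (hN u v huv)

lemma exists_path (hN : D.Avoids N) (huv : u ≠ v) :
    ∃ f : ℝ → ℂ, ContinuousOn f (Icc 0 1) ∧ InjOn f (Icc 0 1) ∧ f 0 = sphereChart N (D.vtx u) ∧
      f 1 = sphereChart N (D.vtx v) ∧ sphereChart N '' D.arc u v = f '' Icc 0 1 := by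
  obtain ⟨f, hf, hi, h0, h1, harc⟩ := D.isArc u v huv
  have hmaps : MapsTo f (Icc 0 1) {N}ᶜ := fun t ht =>
    ne_of_mem_of_not_mem (harc ▸ mem_image_of_mem f ht) (hN u v huv)
  refine ⟨sphereChart N ∘ f, (continuousOn_sphereChart N).comp hf hmaps,
    (injOn_sphereChart N).comp hi hmaps, ?_, ?_, ?_⟩
  · rw [Function.comp_apply, h0]
  · rw [Function.comp_apply, h1]
  · rw [harc, image_comp]

lemma logArc_image_arc (hN : D.Avoids N) (huv : u ≠ v) : LogArc (sphereChart N '' D.arc u v) := by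
  obtain ⟨f, hf, hi, -, -, hfarc⟩ := hN.exists_path huv
  exact hfarc ▸ logArc_image_Icc zero_le_one hf hi

lemma image_arc_inter (hN : D.Avoids N) (h : Distinct a b c) :
    sphereChart N '' D.arc a b ∩ sphereChart N '' D.arc a c = {sphereChart N (D.vtx a)} := by
  rw [← (injOn_sphereChart N).image_inter (subset_compl_singleton_iff.2 (hN a b h.left))
    (subset_compl_singleton_iff.2 (hN a c h.outer)), D.adj_arcs a b c h.left h.outer h.right,
    image_singleton]

lemma image_arc_inter_right (hN : D.Avoids N) (h : Distinct a b c) :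
    sphereChart N '' D.arc a c ∩ sphereChart N '' D.arc c b = {sphereChart N (D.vtx c)} := by
  rw [D.arc_symm a c]
  exact hN.image_arc_inter h.swap_right.swap_left

lemma logArc_union (hN : D.Avoids N) (h : Distinct a b c) :
    LogArc (sphereChart N '' D.arc a c ∪ sphereChart N '' D.arc c b) :=
  (hN.logArc_image_arc h.outer).union (hN.logArc_image_arc h.right.symm)
    (hN.image_arc_inter_right h)

lemma notMem_tri (hN : D.Avoids N) (h : Distinct a b c) : N ∉ D.tri a b c := by
  rintro ((hmem | hmem) | hmem)
  · exact hN _ _ h.left hmem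
  · exact hN _ _ h.right hmem
  · exact hN _ _ h.outer hmem

lemma sphereJordanPair (hN : D.Avoids N) (h : Distinct a b c) :
    SphereJordanPair N (D.arc a b) (D.arc a c ∪ D.arc c b) (D.vtx a) (D.vtx b) where
  jordanPair :=
    { left := hN.logArc_image_arc h.left
      right := image_union .. ▸ hN.logArc_union h
      inter_eq := by
        rw [image_union, inter_union_distrib_left, hN.image_arc_inter h, D.arc_symm a b,
          D.arc_symm c b, hN.image_arc_inter h.swap_left, singleton_union]
      ne := fun hab => h.left (D.vtx_inj
        (injOn_sphereChart N (hN.vtx_ne h.left) (hN.vtx_ne h.left.symm) hab)) }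
  notMem := D.arc_union_arc_union_arc a b c ▸ hN.notMem_tri h

lemma sphereChart_notMem (hN : D.Avoids N) (h : Distinct a b c) (hx : x ≠ N)
    (hxc : x ∉ D.arc a c ∪ D.arc c b) :
    sphereChart N x ∉ sphereChart N '' (D.arc a c ∪ D.arc c b) :=
  mt (sphereChart_mem_image_iff (fun hmem => (hN.sphereJordanPair h).notMem (.inr hmem)) hx).1 hxc

end Avoids

/-- The winding number of the drawn triangle `a b c`, traversed from `a` to `b` along their common
edge and back to `a` through `c`. -/
def triWind (D : GoodDrawing n SpherePt) (N : SpherePt) (a b c : Fin n) : SpherePt → ℂ :=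
  sphereWind N (D.arc a b) (D.arc a c ∪ D.arc c b) (D.vtx a) (D.vtx b)

lemma triWind_swap_left (D : GoodDrawing n SpherePt) (N : SpherePt) (a b c : Fin n)
    (z : SpherePt) : D.triWind N b a c z = -D.triWind N a b c z := by
  rcases eq_or_ne z N with rfl | hz
  · simp only [triWind, sphereWind_self, neg_zero]
  · simp only [triWind, sphereWind_of_ne hz, wind]
    rw [D.arc_symm b a, D.arc_symm b c, D.arc_symm c a, union_comm (D.arc c b),
      logVar_swap _ (sphereChart N (D.vtx a)), logVar_swap _ (sphereChart N (D.vtx a))]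
    ring

namespace Avoids

variable {z : SpherePt}

lemma logVar_image_arc_union (hN : D.Avoids N) (h : Distinct a b c) (hzN : z ≠ N)
    (hz : z ∉ D.tri a b c) :
    logVar (sphereChart N '' D.arc a c ∪ sphereChart N '' D.arc c b) (sphereChart N (D.vtx a))
        (sphereChart N (D.vtx b)) (sphereChart N z) =
      logVar (sphereChart N '' D.arc a c) (sphereChart N (D.vtx a)) (sphereChart N (D.vtx c))
          (sphereChart N z) +
        logVar (sphereChart N '' D.arc c b) (sphereChart N (D.vtx c)) (sphereChart N (D.vtx b))
          (sphereChart N z) := by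
  refine logVar_union (hN.logArc_image_arc h.outer) (hN.logArc_image_arc h.right.symm)
    (hN.image_arc_inter_right h) (mem_image_of_mem _ (D.vtx_left_mem_arc h.outer))
    (mem_image_of_mem _ (D.vtx_right_mem_arc h.right.symm)) ?_
  rw [← image_union]
  exact hN.sphereChart_notMem h hzN fun hmem => hz (D.arc_union_arc_union_arc a b c ▸ .inr hmem)

lemma triWind_swap_right (hN : D.Avoids N) (h : Distinct a b c) (hz : z ∉ D.tri a b c) :
    D.triWind N a c b z = -D.triWind N a b c z := by
  rcases eq_or_ne z N with rfl | hzN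
  · simp only [triWind, sphereWind_self, neg_zero]
  simp only [triWind, sphereWind_of_ne hzN, wind, image_union]
  rw [hN.logVar_image_arc_union h hzN hz,
    hN.logVar_image_arc_union h.swap_right hzN (D.tri_swap_right a b c ▸ hz), D.arc_symm c b,
    logVar_swap _ (sphereChart N (D.vtx b)) (sphereChart N (D.vtx c))]
  ring

lemma locallyConstantOff_triWind (hN : D.Avoids N) (h : Distinct a b c) :
    LocallyConstantOff (D.tri a b c) (D.triWind N a b c) :=
  D.arc_union_arc_union_arc a b c ▸ (hN.sphereJordanPair h).locallyConstantOff_sphereWind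

lemma connectedComponentIn_compl_tri (hN : D.Avoids N) (h : Distinct a b c)
    (hz : z ∉ D.tri a b c) : connectedComponentIn (D.tri a b c)ᶜ z =
      {p | p ∉ D.tri a b c ∧ D.triWind N a b c p = D.triWind N a b c z} := by
  refine ((hN.locallyConstantOff_triWind h).connectedComponentIn_subset hz).antisymm ?_
  have hpre := (hN.sphereJordanPair h).isPreconnected_setOf_sphereWind_eq (D.triWind N a b c z)
  rw [D.arc_union_arc_union_arc] at hpre
  exact hpre.subset_connectedComponentIn ⟨hz, rfl⟩ fun p hp => hp.1

lemma exists_forall_triWind_eq (hN : D.Avoids N) (h : Distinct a b c) :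
    ∃ v ≠ 0, ∀ z ∉ D.tri a b c, D.triWind N a b c z = 0 ∨ D.triWind N a b c z = v :=
  D.arc_union_arc_union_arc a b c ▸ (hN.sphereJordanPair h).exists_forall_sphereWind_eq

lemma mem_closure_setOf_triWind (hN : D.Avoids N) (h : Distinct a b c)
    (hx : x ∈ D.openArc a b) :
    x ∈ closure {z | z ∉ D.tri a b c ∧ D.triWind N a b c z ≠ 0} ∧
      x ∈ closure {z | z ∉ D.tri a b c ∧ D.triWind N a b c z = 0} := by
  have hxN : x ≠ N := ne_of_mem_of_not_mem hx.1 (hN a b h.left)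
  have hpair := hN.sphereJordanPair h
  have hne : ∀ {e}, D.vtx e ≠ N → x ≠ D.vtx e → sphereChart N x ≠ sphereChart N (D.vtx e) :=
    fun he hxe hchart => hxe (injOn_sphereChart N hxN he hchart)
  obtain ⟨f, hf, hi, h0, h1, hfarc⟩ := hN.exists_path h.left
  obtain ⟨A', A'', hA', hA'', hA, hinter, ha, hb⟩ :=
    exists_logArc_split hf hi (hfarc ▸ mem_image_of_mem (sphereChart N) hx.1)
  have hcl := hpair.jordanPair.mem_closure_setOf_wind hA' hA'' (hA.trans hfarc.symm) hinter
    (h0 ▸ ha) (h1 ▸ hb) (hne (hN.vtx_ne h.left) fun hxa => hx.2 (.inl hxa))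
    (hne (hN.vtx_ne h.left.symm) fun hxb => hx.2 (.inr hxb))
  rw [← D.arc_union_arc_union_arc]
  exact ⟨hpair.mem_closure_of_chart (P := (· ≠ 0)) hxN hcl.1,
    hpair.mem_closure_of_chart (P := (· = 0)) hxN hcl.2⟩

lemma exists_eventually_triWind_sub_eq (hN : D.Avoids N) (hc : Distinct a b c)
    (hd : Distinct a b d) (hx : x ∈ D.openArc a b) :
    ∃ k, ∀ᶠ z in 𝓝 x, D.triWind N a b d z - D.triWind N a b c z = k := by
  have hxN : x ≠ N := ne_of_mem_of_not_mem hx.1 (hN a b hc.left)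
  have hnhds := isOpen_compl_singleton.mem_nhds hxN
  have Jc := (hN.sphereJordanPair hc).jordanPair
  have Jd := (hN.sphereJordanPair hd).jordanPair
  have hloc := Jc.right.locallyConstantOff_logVar_sub Jd.right ⟨Jc.left_mem.2, Jd.left_mem.2⟩
    ⟨Jc.right_mem.2, Jd.right_mem.2⟩ (sphereChart N x) fun hxcd => hxcd.elim
      (hN.sphereChart_notMem hc hxN (notMem_of_mem_openArc hc hx))
      (hN.sphereChart_notMem hd hxN (notMem_of_mem_openArc hd hx))
  refine ⟨D.triWind N a b d x - D.triWind N a b c x, ?_⟩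
  filter_upwards [((continuousOn_sphereChart N).continuousAt hnhds).eventually hloc, hnhds]
    with z hz hzN
  simpa only [triWind, sphereWind_of_ne hzN, sphereWind_of_ne hxN, wind,
    sub_sub_sub_cancel_left] using hz

lemma finite_setOf_isOpenSide (hN : D.Avoids N) (h : Distinct a b c) :
    {U | IsOpenSide (D.tri a b c) U}.Finite := by
  obtain ⟨v, -, hv⟩ := hN.exists_forall_triWind_eq h
  refine (toFinite ((fun w => {p | p ∉ D.tri a b c ∧ D.triWind N a b c p = w}) '' {0, v})).subset ?_
  rintro U ⟨q, hq, rfl⟩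
  exact ⟨_, hv q hq, (hN.connectedComponentIn_compl_tri h hq).symm⟩

end Avoids

lemma finite_emptyTriangles (D : GoodDrawing n SpherePt) : D.emptyTriangles.Finite := by
  obtain ⟨N, hN⟩ := D.exists_avoids
  have hfin : (⋃ t ∈ {t : Fin n × Fin n × Fin n | Distinct t.1 t.2.1 t.2.2},
      {U | IsOpenSide (D.tri t.1 t.2.1 t.2.2) U}).Finite :=
    (toFinite _).biUnion fun t ht => hN.finite_setOf_isOpenSide ht
  refine (finite_univ.prod hfin).subset ?_
  rintro ⟨T, U⟩ ⟨a, b, c, hab, hac, hbc, -, hU, -⟩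
  exact ⟨mem_univ T, mem_biUnion (x := (a, b, c)) ⟨hab, hac, hbc⟩ hU⟩

end GoodDrawing

end TriWind

/-! ### Hereditarily convex drawings -/

section HereditarilyConvex

namespace GoodDrawing

variable {n : ℕ} {D : GoodDrawing n SpherePt} {Δ : Fin n → Fin n → Fin n → Set SpherePt}
  {N : SpherePt} {a b c x : Fin n} {p q : SpherePt}

/-- The choice `Δ` of one closed disc for each triangle witnesses that `D` is hereditarily
convex. -/
structure IsHereditarilyConvex (D : GoodDrawing n SpherePt)
    (Δ : Fin n → Fin n → Fin n → Set SpherePt) : Prop where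
  isClosedSide : ∀ {a b c}, Distinct a b c → IsClosedSide (D.tri a b c) (Δ a b c)
  convexDisc : ∀ {a b c}, Distinct a b c → D.ConvexDisc (Δ a b c)
  swap_left : ∀ a b c, Δ b a c = Δ a b c
  swap_right : ∀ a b c, Δ a c b = Δ a b c
  hereditary : ∀ {a b c a' b' c'}, Distinct a b c → Distinct a' b' c' →
    D.tri a' b' c' ⊆ Δ a b c → Δ a' b' c' ⊆ Δ a b c

/-- The open disc obtained from the chosen closed disc of a triangle by removing its boundary. -/
def openSide (D : GoodDrawing n SpherePt) (Δ : Fin n → Fin n → Fin n → Set SpherePt)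
    (a b c : Fin n) : Set SpherePt :=
  Δ a b c \ D.tri a b c

/-- The vertices drawn in the chosen open disc of a triangle. -/
def inside (D : GoodDrawing n SpherePt) (Δ : Fin n → Fin n → Fin n → Set SpherePt)
    (a b c : Fin n) : Set (Fin n) :=
  D.vtx ⁻¹' D.openSide Δ a b c

lemma vtx_mem_tri (D : GoodDrawing n SpherePt) (h : Distinct a b c) : D.vtx a ∈ D.tri a b c :=
  .inr (D.vtx_left_mem_arc h.outer)

lemma distinct_of_mem_inside (h : Distinct a b c) (hx : x ∈ D.inside Δ a b c) :
    Distinct a b x where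
  left := h.left
  outer := by
    rintro rfl
    exact hx.2 (D.vtx_mem_tri h)
  right := by
    rintro rfl
    exact hx.2 (D.tri_swap_left a b c ▸ D.vtx_mem_tri h.swap_left)

namespace IsHereditarilyConvex

lemma tri_subset (hD : D.IsHereditarilyConvex Δ) (h : Distinct a b c) :
    D.tri a b c ⊆ Δ a b c := by
  obtain ⟨q, -, hq⟩ := hD.isClosedSide h
  exact hq ▸ subset_union_right

lemma isOpenSide_openSide (hD : D.IsHereditarilyConvex Δ) (h : Distinct a b c) :
    IsOpenSide (D.tri a b c) (D.openSide Δ a b c) := by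
  obtain ⟨q, hqtri, hq⟩ := hD.isClosedSide h
  refine ⟨q, hqtri, ?_⟩
  rw [openSide, hq, union_sdiff_right]
  exact sdiff_eq_left.2 (disjoint_left.2 (connectedComponentIn_subset _ _))

lemma openSide_swap_left (hD : D.IsHereditarilyConvex Δ) (a b c : Fin n) :
    D.openSide Δ b a c = D.openSide Δ a b c := by
  rw [openSide, openSide, hD.swap_left, D.tri_swap_left]

lemma openSide_swap_right (hD : D.IsHereditarilyConvex Δ) (a b c : Fin n) :
    D.openSide Δ a c b = D.openSide Δ a b c := by
  rw [openSide, openSide, hD.swap_right, D.tri_swap_right]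

lemma exists_openSide_eq (hD : D.IsHereditarilyConvex Δ) (hN : D.Avoids N)
    (h : Distinct a b c) : ∃ q ∉ D.tri a b c, D.openSide Δ a b c =
      {p | p ∉ D.tri a b c ∧ D.triWind N a b c p = D.triWind N a b c q} := by
  obtain ⟨q, hq, hside⟩ := hD.isOpenSide_openSide h
  exact ⟨q, hq, hside.trans (hN.connectedComponentIn_compl_tri h hq)⟩

lemma isOpen_openSide (hD : D.IsHereditarilyConvex Δ) (h : Distinct a b c) :
    IsOpen (D.openSide Δ a b c) := by
  obtain ⟨N, hN⟩ := D.exists_avoids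
  obtain ⟨q, -, hq⟩ := hD.exists_openSide_eq hN h
  exact hq ▸ (hN.locallyConstantOff_triWind h).isOpen_setOf (D.isClosed_tri h) (· = _)

lemma notMem_iff (hD : D.IsHereditarilyConvex Δ) (h : Distinct a b c) :
    p ∉ Δ a b c ↔ p ∉ D.tri a b c ∧ p ∉ D.openSide Δ a b c :=
  ⟨fun hp => ⟨fun hpt => hp (hD.tri_subset h hpt), fun hps => hp hps.1⟩,
    fun hp hpΔ => hp.2 ⟨hpΔ, hp.1⟩⟩

/-- The winding number has two values off the triangle, one of which is zero; which of them is
taken inside the chosen disc depends on the position of the point at infinity `N`. -/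
lemma exists_triWind_values (hD : D.IsHereditarilyConvex Δ) (hN : D.Avoids N)
    (h : Distinct a b c) : ∃ w w', w ≠ w' ∧ (w = 0 ∨ w' = 0) ∧
      D.openSide Δ a b c = {p | p ∉ D.tri a b c ∧ D.triWind N a b c p = w} ∧
      (Δ a b c)ᶜ = {p | p ∉ D.tri a b c ∧ D.triWind N a b c p = w'} := by
  obtain ⟨v, hv0, hv⟩ := hN.exists_forall_triWind_eq h
  obtain ⟨q, hq, hside⟩ := hD.exists_openSide_eq hN h
  have hcompl : ∀ p, p ∈ (Δ a b c)ᶜ ↔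
      p ∉ D.tri a b c ∧ D.triWind N a b c p ≠ D.triWind N a b c q := fun p => by
    rw [mem_compl_iff, hD.notMem_iff h, hside, mem_ofPred_eq]
    tauto
  rcases hv q hq with hw | hw <;> rw [hw] at hside hcompl
  · refine ⟨0, v, hv0.symm, .inl rfl, hside, ext fun p => (hcompl p).trans ?_⟩
    exact and_congr_right fun hp => ⟨(hv p hp).resolve_left, fun hpv => hpv ▸ hv0⟩
  · refine ⟨v, 0, hv0, .inr rfl, hside, ext fun p => (hcompl p).trans ?_⟩
    exact and_congr_right fun hp => ⟨(hv p hp).resolve_right, fun hp0 => hp0 ▸ hv0.symm⟩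

lemma mem_closure_openSide (hD : D.IsHereditarilyConvex Δ) (h : Distinct a b c)
    (hp : p ∈ D.openArc a b) :
    p ∈ closure (D.openSide Δ a b c) ∧ p ∈ closure (Δ a b c)ᶜ := by
  obtain ⟨N, hN⟩ := D.exists_avoids
  obtain ⟨hne, heq⟩ := hN.mem_closure_setOf_triWind h hp
  obtain ⟨w, w', hww', hw | hw', hin, hout⟩ := hD.exists_triWind_values hN h
  · subst hw
    refine ⟨hin ▸ heq, closure_mono (fun q hq => ?_) hne⟩
    exact (hD.notMem_iff h).2 ⟨hq.1, hin ▸ fun hq' => hq.2 hq'.2⟩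
  · subst hw'
    refine ⟨closure_mono (fun q hq => ?_) hne, hout ▸ heq⟩
    exact ⟨not_not.1 fun hqΔ => hq.2 (hout.subset hqΔ).2, hq.1⟩

lemma disc_subset_of_mem_inside (hD : D.IsHereditarilyConvex Δ) (h : Distinct a b c)
    (hx : x ∈ D.inside Δ a b c) : Δ a b x ⊆ Δ a b c := by
  have hdist := distinct_of_mem_inside h hx
  have ha : D.vtx a ∈ Δ a b c := hD.tri_subset h (D.vtx_mem_tri h)
  have hb : D.vtx b ∈ Δ a b c := hD.swap_left a b c ▸ hD.tri_subset h.swap_left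
    (D.vtx_mem_tri h.swap_left)
  have hconv := hD.convexDisc h
  exact hD.hereditary h hdist (union_subset (union_subset (hconv a b h.left ha hb)
    (hconv b x hdist.right hb hx.1)) (hconv a x hdist.outer ha hx.1))

/-- Otherwise the disc of `a`, `b`, `x` would be a neighbourhood of `c`, hence contain points on
both sides of the edge `c a` near `c`. -/
lemma notMem_inside_of_mem_inside (hD : D.IsHereditarilyConvex Δ) (h : Distinct a b c)
    (hx : x ∈ D.inside Δ a b c) : c ∉ D.inside Δ a b x := by
  intro hc
  have hopen := hD.isOpen_openSide (distinct_of_mem_inside h hx)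
  have hrot : Distinct c a b := h.swap_right.swap_left
  obtain ⟨p, hpx, hp⟩ := mem_closure_iff.1 (D.vtx_mem_closure_openArc hrot.left) _ hopen hc
  obtain ⟨q, hqx, hq⟩ := mem_closure_iff.1 (hD.mem_closure_openSide hrot hp).2 _ hopen hpx
  rw [hD.swap_left, hD.swap_right] at hq
  exact hq (hD.disc_subset_of_mem_inside h hx hqx.1)

lemma inside_subset_of_mem_inside (hD : D.IsHereditarilyConvex Δ) (h : Distinct a b c)
    (hx : x ∈ D.inside Δ a b c) : D.inside Δ a b x ⊆ D.inside Δ a b c := by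
  intro y hy
  have hdist := distinct_of_mem_inside (distinct_of_mem_inside h hx) hy
  refine ⟨hD.disc_subset_of_mem_inside h hx hy.1,
    vtx_notMem_tri_s16 h hdist.outer.symm hdist.right.symm ?_⟩
  rintro rfl
  exact hD.notMem_inside_of_mem_inside h hx hy

end IsHereditarilyConvex

/-- `χ` is the jump of the winding number of the triangle `a b c` from the outside to the inside of
its chosen disc. Its sign says whether the disc lies to the left of the triangle. -/
def IsJump (D : GoodDrawing n SpherePt) (Δ : Fin n → Fin n → Fin n → Set SpherePt) (N : SpherePt)
    (a b c : Fin n) (χ : ℂ) : Prop :=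
  ∀ p ∈ D.openSide Δ a b c, ∀ q ∉ Δ a b c, D.triWind N a b c p - D.triWind N a b c q = χ

namespace IsHereditarilyConvex

variable {χ χ' : ℂ}

lemma exists_mem_openSide (hD : D.IsHereditarilyConvex Δ) (h : Distinct a b c) :
    ∃ p q, p ∈ D.openSide Δ a b c ∧ q ∉ Δ a b c := by
  obtain ⟨x, hx⟩ := D.openArc_nonempty h.left
  obtain ⟨hin, hout⟩ := hD.mem_closure_openSide h hx
  obtain ⟨p, hp⟩ := closure_nonempty_iff.1 ⟨x, hin⟩
  obtain ⟨q, hq⟩ := closure_nonempty_iff.1 ⟨x, hout⟩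
  exact ⟨p, q, hp, hq⟩

lemma exists_isJump (hD : D.IsHereditarilyConvex Δ) (hN : D.Avoids N) (h : Distinct a b c) :
    ∃ χ ≠ 0, D.IsJump Δ N a b c χ := by
  obtain ⟨w, w', hww', -, hin, hout⟩ := hD.exists_triWind_values hN h
  refine ⟨w - w', sub_ne_zero.2 hww', fun p hp q hq => ?_⟩
  rw [(hin.subset hp).2, (hout.subset hq).2]

lemma isJump_unique (hD : D.IsHereditarilyConvex Δ) (h : Distinct a b c)
    (hχ : D.IsJump Δ N a b c χ) (hχ' : D.IsJump Δ N a b c χ') : χ = χ' := by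
  obtain ⟨p, q, hp, hq⟩ := hD.exists_mem_openSide h
  exact (hχ p hp q hq).symm.trans (hχ' p hp q hq)

lemma isJump_swap_left (hD : D.IsHereditarilyConvex Δ) (hχ : D.IsJump Δ N a b c χ) :
    D.IsJump Δ N b a c (-χ) := by
  intro p hp q hq
  rw [hD.openSide_swap_left] at hp
  rw [hD.swap_left] at hq
  rw [D.triWind_swap_left N a b c p, D.triWind_swap_left N a b c q, ← hχ p hp q hq]
  ring

lemma isJump_swap_right (hD : D.IsHereditarilyConvex Δ) (hN : D.Avoids N) (h : Distinct a b c)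
    (hχ : D.IsJump Δ N a b c χ) : D.IsJump Δ N a c b (-χ) := by
  intro p hp q hq
  rw [hD.openSide_swap_right] at hp
  rw [hD.swap_right] at hq
  rw [hN.triWind_swap_right h hp.2, hN.triWind_swap_right h ((hD.notMem_iff h).1 hq).1,
    ← hχ p hp q hq]
  ring

/-- Near an interior point of the edge `a b` the two winding numbers differ by a constant, while
`Δ a b x ⊆ Δ a b c` lie on the same side of that edge. -/
lemma isJump_eq_of_mem_inside (hD : D.IsHereditarilyConvex Δ) (hN : D.Avoids N)
    (h : Distinct a b c) (hx : x ∈ D.inside Δ a b c) (hχ : D.IsJump Δ N a b c χ)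
    (hχ' : D.IsJump Δ N a b x χ') : χ' = χ := by
  have hdist := distinct_of_mem_inside h hx
  have hsub := hD.disc_subset_of_mem_inside h hx
  obtain ⟨z, hz⟩ := D.openArc_nonempty h.left
  obtain ⟨k, hk⟩ := hN.exists_eventually_triWind_sub_eq hdist h hz
  have hclosed : IsClosed (D.arc a c ∪ D.arc c b) :=
    (D.isClosed_arc h.outer).union (D.isClosed_arc h.right.symm)
  have hV := hk.and (hclosed.isOpen_compl.mem_nhds (notMem_of_mem_openArc h hz))
  obtain ⟨p, ⟨hpk, hpc⟩, hp⟩ :=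
    mem_closure_iff_nhds.1 (hD.mem_closure_openSide hdist hz).1 _ hV
  obtain ⟨q, ⟨hqk, -⟩, hq⟩ := mem_closure_iff_nhds.1 (hD.mem_closure_openSide h hz).2 _ hV
  have hptri : p ∉ D.tri a b c := by
    rw [← D.arc_union_arc_union_arc]
    exact fun hmem => hmem.elim (fun hab => hp.2 (.inl (.inl hab))) hpc
  have hjump := hχ p ⟨hsub hp.1, hptri⟩ q hq
  have hjump' := hχ' p hp q fun hqx => hq (hsub hqx)
  linear_combination hjump - hjump' - hpk + hqk

end IsHereditarilyConvex

end GoodDrawing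

end HereditarilyConvex

/-! ### Nested triangles on a linearly ordered vertex set -/

section NestedTriangles

open Finset

variable {V : Type*} {In : V → V → V → Set V}

/-- The combinatorics of the discs chosen in a hereditarily convex drawing: `In a b c` is the set of
vertices inside the triangle `a b c`, and `χ a b c` is the side of the oriented triangle on which
its disc lies, so that only `χ ≠ -χ` is required of its values. -/
structure NestedTriangles {S : Type*} [InvolutiveNeg S] (In : V → V → V → Set V)
    (χ : V → V → V → S) : Prop where
  swap_left : ∀ a b c, In b a c = In a b c
  swap_right : ∀ a b c, In a c b = In a b c
  distinct : ∀ {a b c x}, Distinct a b c → x ∈ In a b c → Distinct a b x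
  subset : ∀ {a b c x}, Distinct a b c → x ∈ In a b c → In a b x ⊆ In a b c
  sign_ne_neg : ∀ {a b c}, Distinct a b c → χ a b c ≠ -χ a b c
  sign_swap_left : ∀ {a b c}, Distinct a b c → χ b a c = -χ a b c
  sign_swap_right : ∀ {a b c}, Distinct a b c → χ a c b = -χ a b c
  sign_eq : ∀ {a b c x}, Distinct a b c → x ∈ In a b c → χ a b x = χ a b c

/-- The triangles of `In` after renaming the vertices: the new vertex `v` is the old `f v`. -/
def relabel {V' : Type*} (f : V' → V) (In : V → V → V → Set V) (a b c : V') : Set V' :=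
  f ⁻¹' In (f a) (f b) (f c)

/-- The intermediate value property: a vertex inside a triangle is neither below nor above all
three vertices of the triangle. -/
def IntermediateValue [LT V] (In : V → V → V → Set V) : Prop :=
  ∀ {a b c}, Distinct a b c → ∀ x ∈ In a b c,
    (∃ y ∈ ({a, b, c} : Set V), y < x) ∧ ∃ y ∈ ({a, b, c} : Set V), x < y

/-- `k` is, or lies inside the triangle of, every vertex strictly between `i` and `j`; then `i k j`
is the only triangle with extremes `i` and `j` that contains no vertex. -/
def IsSoleMiddle [LT V] (In : V → V → V → Set V) (i j k : V) : Prop :=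
  i < k ∧ k < j ∧ ∀ l, i < l → l < j → l = k ∨ k ∈ In i l j

open Classical in
/-- The middle vertices of the vertex-free triangles with extremes `i` and `j`. -/
def emptyMiddles [LT V] [Fintype V] (In : V → V → V → Set V) (i j : V) : Finset V :=
  {k | i < k ∧ k < j ∧ In i k j = ∅}

/-- The vertex-free triangles, as their extremes together with their middle vertex. -/
def emptyTriples [LT V] [Fintype V] (In : V → V → V → Set V) : Finset (Σ _ : V × V, V) :=
  univ.sigma fun p => emptyMiddles In p.1 p.2

open Classical in
/-- The pairs of extremes in `W` whose vertex-free triangles have a sole middle vertex, not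
necessarily in `W`. -/
def soleMiddlePairs [LT V] (In : V → V → V → Set V) (W : Finset V) : Finset (V × V) :=
  {p ∈ W ×ˢ W | ∃ k, IsSoleMiddle In p.1 p.2 k}

lemma mem_emptyMiddles [LT V] [Fintype V] {i j k : V} :
    k ∈ emptyMiddles In i j ↔ i < k ∧ k < j ∧ In i k j = ∅ := by
  classical
  rw [emptyMiddles, mem_filter_univ]

lemma mem_soleMiddlePairs [LT V] {W : Finset V} {p : V × V} :
    p ∈ soleMiddlePairs In W ↔ (p.1 ∈ W ∧ p.2 ∈ W) ∧ ∃ k, IsSoleMiddle In p.1 p.2 k := by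
  classical
  rw [soleMiddlePairs, mem_filter, mem_product]

lemma Distinct.of_lt [Preorder V] {i j k : V} (hik : i < k) (hkj : k < j) : Distinct i k j :=
  ⟨hik.ne, (hik.trans hkj).ne, hkj.ne⟩

lemma IntermediateValue.mem_Ioo [Preorder V] {i j l x : V} (hIV : IntermediateValue In)
    (hil : i < l) (hlj : l < j) (hx : x ∈ In i l j) : i < x ∧ x < j := by
  obtain ⟨⟨y, hy, hyx⟩, z, hz, hxz⟩ := hIV (.of_lt hil hlj) x hx
  constructor
  · rcases hy with rfl | rfl | rfl
    exacts [hyx, hil.trans hyx, (hil.trans hlj).trans hyx]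
  · rcases hz with rfl | rfl | rfl
    exacts [hxz.trans (hil.trans hlj), hxz.trans hlj, hxz]

namespace NestedTriangles

variable {S : Type*} [InvolutiveNeg S] {χ : V → V → V → S} {i i' j j' k k' : V}

lemma comap {V' : Type*} (h : NestedTriangles In χ) {f : V' → V} (hf : f.Injective) :
    NestedTriangles (relabel f In) fun a b c => χ (f a) (f b) (f c) := by
  exact
    { swap_left := fun a b c => congrArg _ (h.swap_left _ _ _)
      swap_right := fun a b c => congrArg _ (h.swap_right _ _ _)
      distinct := fun hd hx =>
        have hfx := h.distinct (hd.map hf) hx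
        ⟨hd.left, ne_of_apply_ne f hfx.outer, ne_of_apply_ne f hfx.right⟩
      subset := fun hd hx => preimage_mono (h.subset (hd.map hf) hx)
      sign_ne_neg := fun hd => h.sign_ne_neg (hd.map hf)
      sign_swap_left := fun hd => h.sign_swap_left (hd.map hf)
      sign_swap_right := fun hd => h.sign_swap_right (hd.map hf)
      sign_eq := fun hd hx => h.sign_eq (hd.map hf) hx }

lemma sign_middle_eq (h : NestedTriangles In χ) {a b c x : V} (hd : Distinct a c b)
    (hx : x ∈ In a c b) : χ a x b = χ a c b := by
  have hx' : x ∈ In a b c := h.swap_right a c b ▸ hx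
  rw [h.sign_swap_right (h.distinct hd.swap_right hx'), h.sign_eq hd.swap_right hx',
    ← h.sign_swap_right hd.swap_right]

lemma middle_ssubset (h : NestedTriangles In χ) {a b c x : V} (hd : Distinct a c b)
    (hx : x ∈ In a c b) : In a x b ⊂ In a c b := by
  have hx' : x ∈ In a b c := h.swap_right a c b ▸ hx
  have hdx : Distinct a x b := (h.distinct hd.swap_right hx').swap_right
  have hsub : In a x b ⊆ In a c b := by
    rw [← h.swap_right a c b, ← h.swap_right a x b]
    exact h.subset hd.swap_right hx'
  exact hsub.ssubset_of_mem_notMem hx fun hxx => (h.distinct hdx hxx).right rfl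

lemma swap_outer (h : NestedTriangles In χ) (a b c : V) : In c b a = In a b c := by
  rw [h.swap_left, h.swap_right, h.swap_left]

lemma isSoleMiddle_toDual [LT V] (h : NestedTriangles In χ) (hk : IsSoleMiddle In i j k) :
    IsSoleMiddle (V := Vᵒᵈ) In j i k :=
  ⟨hk.2.1, hk.1, fun l hlj hil =>
    (hk.2.2 l hil hlj).imp_right fun hkl => (h.swap_outer i l j).superset hkl⟩

lemma sign_eq_neg_of_lt [Preorder V] (h : NestedTriangles In χ) (hk : IsSoleMiddle In i j k)
    (hk' : IsSoleMiddle In i j' k') (hk'j : k' < j) (hjj' : j < j') :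
    χ i k j = -χ i k' j' := by
  have hij : i < j := hk.1.trans hk.2.1
  have hj : Distinct i j j' := .of_lt hij hjj'
  have hmem : k' ∈ In i j j' := (hk'.2.2 j hij hjj').resolve_left hk'j.ne'
  calc χ i k j = χ i k' j := by
        rcases hk.2.2 k' hk'.1 hk'j with rfl | hmem'
        · rfl
        · exact h.sign_middle_eq (.of_lt hk'.1 hk'j) hmem'
    _ = χ i j' j := h.sign_middle_eq hj.swap_right (h.swap_right i j j' ▸ hmem)
    _ = -χ i j j' := h.sign_swap_right hj
    _ = -χ i k' j' := by rw [h.sign_middle_eq hj hmem]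

section LinearOrder

variable [LinearOrder V]

lemma sign_eq_neg (h : NestedTriangles In χ) (hk : IsSoleMiddle In i j k)
    (hk' : IsSoleMiddle In i j' k') (hkj' : k < j') (hk'j : k' < j) (hne : j ≠ j') :
    χ i k j = -χ i k' j' := by
  rcases hne.lt_or_gt with hlt | hgt
  · exact h.sign_eq_neg_of_lt hk hk' hk'j hlt
  · rw [h.sign_eq_neg_of_lt hk' hk hkj' hgt, neg_neg]

open Classical in
/-- Three such `j` would give three signs that are pairwise negatives of each other. -/
lemma card_soleMiddle_le_two (h : NestedTriangles In χ) (i : V) (R : Finset V) :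
    #{j ∈ R | ∃ k, IsSoleMiddle In i j k ∧ ∀ r ∈ R, k < r} ≤ 2 := by
  by_contra! hcard
  obtain ⟨j₁, j₂, j₃, h₁, h₂, h₃, h₁₂, h₁₃, h₂₃⟩ := two_lt_card_iff.1 hcard
  rw [mem_filter] at h₁ h₂ h₃
  obtain ⟨hj₁, k₁, hk₁, hlt₁⟩ := h₁
  obtain ⟨hj₂, k₂, hk₂, hlt₂⟩ := h₂
  obtain ⟨hj₃, k₃, hk₃, hlt₃⟩ := h₃
  refine h.sign_ne_neg (.of_lt hk₁.1 hk₁.2.1) ?_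
  calc χ i k₁ j₁ = -χ i k₂ j₂ := h.sign_eq_neg hk₁ hk₂ (hlt₁ j₂ hj₂) (hlt₂ j₁ hj₁) h₁₂
    _ = χ i k₃ j₃ := by
      rw [h.sign_eq_neg hk₂ hk₃ (hlt₂ j₃ hj₃) (hlt₃ j₂ hj₂) h₂₃, neg_neg]
    _ = -χ i k₁ j₁ := h.sign_eq_neg hk₃ hk₁ (hlt₃ j₁ hj₁) (hlt₁ j₃ hj₃) h₁₃.symm

open Classical in
lemma card_soleMiddle_left_le (h : NestedTriangles In χ) (L R : Finset V) :
    #{p ∈ L ×ˢ R | ∃ k, IsSoleMiddle In p.1 p.2 k ∧ ∀ r ∈ R, k < r} ≤ 2 * #L := by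
  refine card_le_mul_card_image_of_maps_to (f := Prod.fst)
    (fun p hp => (mem_product.1 (mem_filter.1 hp).1).1) 2 fun i _ => ?_
  refine (card_le_card fun p hp => ?_).trans
    ((card_image_le (f := Prod.mk i)).trans (h.card_soleMiddle_le_two i R))
  obtain ⟨hpS, rfl⟩ := mem_filter.1 hp
  obtain ⟨hpLR, hk⟩ := mem_filter.1 hpS
  exact Finset.mem_image_of_mem (Prod.mk p.1) (mem_filter.2 ⟨(mem_product.1 hpLR).2, hk⟩)

open Classical in
lemma card_soleMiddle_right_le (h : NestedTriangles In χ) (L R : Finset V) :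
    #{p ∈ L ×ˢ R | ∃ k, IsSoleMiddle In p.1 p.2 k ∧ ∀ l ∈ L, l < k} ≤ 2 * #R := by
  have hdual : NestedTriangles (V := Vᵒᵈ) In χ := h
  refine (card_le_card_of_injOn Prod.swap (fun p hp => ?_) Prod.swap_injective.injOn).trans
    (hdual.card_soleMiddle_left_le R L)
  obtain ⟨hpLR, k, hk, hlt⟩ := mem_filter.1 hp
  have hpLR := mem_product.1 hpLR
  exact mem_filter.2 ⟨mem_product.2 hpLR.symm, k, h.isSoleMiddle_toDual hk, hlt⟩

lemma card_soleMiddlePairs_union_le (h : NestedTriangles In χ) {L R : Finset V}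
    (hLR : ∀ l ∈ L, ∀ r ∈ R, l < r) :
    #(soleMiddlePairs In (L ∪ R)) ≤
      #(soleMiddlePairs In L) + #(soleMiddlePairs In R) + 2 * #L + 2 * #R := by
  classical
  refine (card_le_card (t := soleMiddlePairs In L ∪ soleMiddlePairs In R ∪
    {p ∈ L ×ˢ R | ∃ k, IsSoleMiddle In p.1 p.2 k ∧ ∀ r ∈ R, k < r} ∪
    {p ∈ L ×ˢ R | ∃ k, IsSoleMiddle In p.1 p.2 k ∧ ∀ l ∈ L, l < k}) fun p hp => ?_).trans ?_
  · obtain ⟨⟨hi, hj⟩, k, hk⟩ := mem_soleMiddlePairs.1 hp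
    simp only [Finset.mem_union, mem_soleMiddlePairs, mem_filter, mem_product] at hi hj ⊢
    rcases hi with hi | hi <;> rcases hj with hj | hj
    · exact .inl (.inl (.inl ⟨⟨hi, hj⟩, k, hk⟩))
    · by_cases hkR : ∀ r ∈ R, k < r
      · exact .inl (.inr ⟨⟨hi, hj⟩, k, hk, hkR⟩)
      · push Not at hkR
        obtain ⟨r, hr, hrk⟩ := hkR
        exact .inr ⟨⟨hi, hj⟩, k, hk, fun l hl => (hLR l hl r hr).trans_le hrk⟩
    · exact absurd (hLR _ hj _ hi) (hk.1.trans hk.2.1).not_gt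
    · exact .inl (.inl (.inr ⟨⟨hi, hj⟩, k, hk⟩))
  · exact (Finset.card_union_le _ _).trans (add_le_add ((Finset.card_union_le _ _).trans
      (add_le_add (Finset.card_union_le _ _) (h.card_soleMiddle_left_le L R)))
      (h.card_soleMiddle_right_le L R))

end LinearOrder

end NestedTriangles

lemma exists_lt_split_of_card_le [LinearOrder V] {m n : ℕ} {W : Finset V} (hW : #W ≤ m + n) :
    ∃ L R, L ∪ R = W ∧ Disjoint L R ∧ #L ≤ m ∧ #R ≤ n ∧ ∀ l ∈ L, ∀ r ∈ R, l < r := by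
  induction m generalizing W with
  | zero => exact ⟨∅, W, by simpa using hW⟩
  | succ m ih =>
    rcases W.eq_empty_or_nonempty with rfl | hne
    · exact ⟨∅, ∅, by simp⟩
    have hmin := W.min'_mem hne
    obtain ⟨L, R, hLR, hdisj, hL, hR, hlt⟩ := ih (W := W.erase (W.min' hne)) <| by
      rw [card_erase_of_mem hmin]
      omega
    have hminR : ∀ r ∈ R, W.min' hne < r := fun r hr =>
      W.min'_lt_of_mem_erase_min' hne (hLR ▸ mem_union_right L hr)
    refine ⟨insert (W.min' hne) L, R, ?_, ?_, (card_insert_le _ _).trans (by omega), hR, ?_⟩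
    · rw [Finset.insert_union, hLR, insert_erase hmin]
    · exact disjoint_insert_left.2 ⟨fun hmem => (hminR _ hmem).false, hdisj⟩
    · exact forall_mem_insert _ _ _ |>.2 ⟨hminR, hlt⟩

namespace NestedTriangles

variable [LinearOrder V] {S : Type*} [InvolutiveNeg S] {χ : V → V → V → S}

lemma card_soleMiddlePairs_le (h : NestedTriangles In χ) {m : ℕ} {W : Finset V}
    (hW : #W ≤ 2 ^ m) : #(soleMiddlePairs In W) ≤ 2 * m * #W := by
  induction m generalizing W with
  | zero =>
    have hempty : soleMiddlePairs In W = ∅ := by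
      refine eq_empty_of_forall_notMem fun p hp => ?_
      obtain ⟨⟨hi, hj⟩, k, hik, hkj, -⟩ := mem_soleMiddlePairs.1 hp
      exact (hik.trans hkj).ne (card_le_one.1 hW _ hi _ hj)
    simp [hempty]
  | succ m ih =>
    obtain ⟨L, R, rfl, hdisj, hL, hR, hlt⟩ :=
      exists_lt_split_of_card_le (hW.trans_eq (by ring : 2 ^ (m + 1) = 2 ^ m + 2 ^ m))
    calc #(soleMiddlePairs In (L ∪ R))
        ≤ #(soleMiddlePairs In L) + #(soleMiddlePairs In R) + 2 * #L + 2 * #R :=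
          h.card_soleMiddlePairs_union_le hlt
      _ ≤ 2 * m * #L + 2 * m * #R + 2 * #L + 2 * #R := by gcongr <;> exact ih ‹_›
      _ = 2 * (m + 1) * #(L ∪ R) := by
          rw [card_union_of_disjoint hdisj]
          ring

end NestedTriangles

end NestedTriangles

/-! ### Counting vertex-free triangles -/

section EmptyTriples

open Finset

variable {V : Type*} [LinearOrder V] [Fintype V] {In : V → V → V → Set V}
  {S : Type*} [InvolutiveNeg S] {χ : V → V → V → S} {i j l : V}

lemma card_product_filter_covBy_le [DecidablePred fun p : V × V => p.1 ⋖ p.2] :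
    #{p : V × V | p.1 ⋖ p.2} ≤ Fintype.card V := by
  refine card_le_card_of_injOn Prod.fst (fun p _ => mem_univ p.1) fun p hp q hq hpq => ?_
  have hp := (mem_filter_univ p).1 hp
  have hq := (mem_filter_univ q).1 hq
  exact Prod.ext hpq (hp.unique_right (hpq ▸ hq))

lemma eq_of_insert_eq_of_lt {V : Type*} [LinearOrder V] {i j k i' j' k' : V} (hik : i < k)
    (hkj : k < j) (hik' : i' < k') (hkj' : k' < j')
    (heq : ({i, k, j} : Finset V) = {i', k', j'}) : i = i' ∧ k = k' ∧ j = j' := by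
  simp only [Finset.ext_iff, Finset.mem_insert, Finset.mem_singleton] at heq
  have hi := heq i
  have hk := heq k
  have hj := heq j
  grind

namespace NestedTriangles

lemma exists_mem_emptyMiddles (h : NestedTriangles In χ) (hIV : IntermediateValue In)
    (hil : i < l) (hlj : l < j) : ∃ k ∈ emptyMiddles In i j, k = l ∨ k ∈ In i l j := by
  induction hs : In i l j using WellFoundedLT.induction generalizing l with
  | ind s ih =>
    subst hs
    rcases (In i l j).eq_empty_or_nonempty with hempty | ⟨x, hx⟩
    · exact ⟨l, mem_emptyMiddles.2 ⟨hil, hlj, hempty⟩, .inl rfl⟩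
    have hd : Distinct i l j := .of_lt hil hlj
    obtain ⟨hix, hxj⟩ := hIV.mem_Ioo hil hlj hx
    have hssub : In i x j ⊂ In i l j := h.middle_ssubset hd hx
    obtain ⟨k, hk, hkx⟩ := ih _ hssub hix hxj rfl
    refine ⟨k, hk, .inr ?_⟩
    rcases hkx with rfl | hkx
    exacts [hx, hssub.subset hkx]

lemma two_le_card_emptyMiddles (h : NestedTriangles In χ) (hIV : IntermediateValue In)
    (hij : i < j) (hcov : ¬i ⋖ j) (hsole : ¬∃ k, IsSoleMiddle In i j k) :
    2 ≤ #(emptyMiddles In i j) := by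
  obtain ⟨l, hil, hlj⟩ := exists_lt_lt_of_not_covBy hij hcov
  obtain ⟨k, hk, -⟩ := h.exists_mem_emptyMiddles hIV hil hlj
  obtain ⟨hik, hkj, -⟩ := mem_emptyMiddles.1 hk
  obtain ⟨l', hil', hl'j, hl'k, hkl'⟩ : ∃ l', i < l' ∧ l' < j ∧ l' ≠ k ∧ k ∉ In i l' j := by
    by_contra! hall
    exact hsole ⟨k, hik, hkj, fun l' hil' hl'j => or_iff_not_imp_left.2 (hall l' hil' hl'j)⟩
  obtain ⟨k', hk', hk'l'⟩ := h.exists_mem_emptyMiddles hIV hil' hl'j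
  refine one_lt_card.2 ⟨k, hk, k', hk', ?_⟩
  rintro rfl
  exact hk'l'.elim hl'k.symm hkl'

lemma two_mul_choose_two_card_le (h : NestedTriangles In χ) (hIV : IntermediateValue In) :
    2 * (Fintype.card V).choose 2 ≤ #(emptyTriples In) + 2 * Fintype.card V +
      2 * #(soleMiddlePairs In univ) := by
  classical
  set good : Finset (V × V) :=
    {p | p.1 < p.2 ∧ ¬p.1 ⋖ p.2 ∧ ¬∃ k, IsSoleMiddle In p.1 p.2 k} with hgood
  set adj : Finset (V × V) := {p | p.1 ⋖ p.2} with hadj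
  have hcover : ({p | p.1 < p.2} : Finset (V × V)) ⊆
      good ∪ (adj ∪ soleMiddlePairs In univ) := by
    intro p hp
    simp only [hgood, hadj, Finset.mem_union, mem_filter_univ, mem_soleMiddlePairs,
      Finset.mem_univ, and_self, true_and] at hp ⊢
    tauto
  have htwo : 2 * #good ≤ #(emptyTriples In) := by
    calc 2 * #good = ∑ _p ∈ good, 2 := by rw [sum_const, smul_eq_mul, mul_comm]
      _ ≤ ∑ p ∈ good, #(emptyMiddles In p.1 p.2) := sum_le_sum fun p hp => by
          obtain ⟨hlt, hcov, hsole⟩ := (mem_filter_univ p).1 hp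
          exact h.two_le_card_emptyMiddles hIV hlt hcov hsole
      _ ≤ #(emptyTriples In) := by
          rw [emptyTriples, card_sigma]
          exact sum_le_univ_sum_of_nonneg fun _ => Nat.zero_le _
  have hcount : #{p : V × V | p.1 < p.2} ≤
      #good + (Fintype.card V + #(soleMiddlePairs In univ)) :=
    calc #{p : V × V | p.1 < p.2} ≤ #(good ∪ (adj ∪ soleMiddlePairs In univ)) :=
          card_le_card hcover
      _ ≤ #good + (#adj + #(soleMiddlePairs In univ)) :=
          (Finset.card_union_le _ _).trans (by gcongr; exact Finset.card_union_le _ _)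
      _ ≤ #good + (Fintype.card V + #(soleMiddlePairs In univ)) := by
          gcongr
          exact card_product_filter_covBy_le
  rw [Fintype.card_product_filter_lt] at hcount
  omega

lemma sq_card_sub_le_card_emptyTriples (h : NestedTriangles In χ) (hIV : IntermediateValue In)
    (hV : 2 ≤ Fintype.card V) :
    (Fintype.card V : ℝ) ^ 2 - 11 / Real.log 2 * Fintype.card V * Real.log (Fintype.card V) ≤
      #(emptyTriples In) := by
  set n := Fintype.card V
  have hcount := h.two_mul_choose_two_card_le hIV
  have hsole : #(soleMiddlePairs In univ) ≤ 2 * (Nat.log 2 n + 1) * n :=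
    h.card_soleMiddlePairs_le (W := univ) (Nat.lt_pow_succ_log_self one_lt_two n).le
  have hlog : (Nat.log 2 n : ℝ) ≤ Real.logb 2 n := by exact_mod_cast Real.natLog_le_logb n 2
  have hlog_one : 1 ≤ Real.logb 2 n := by
    rw [Real.le_logb_iff_rpow_le one_lt_two (by positivity), Real.rpow_one]
    exact_mod_cast hV
  have hcount' : (n : ℝ) * (n - 1) ≤
      #(emptyTriples In) + 2 * n + 2 * (2 * (Nat.log 2 n + 1) * n) := by
    have hchoose : (n : ℝ) * (n - 1) = 2 * n.choose 2 := by
      rw [Nat.cast_choose_two]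
      ring
    rw [hchoose]
    exact_mod_cast hcount.trans (by gcongr)
  calc (n : ℝ) ^ 2 - 11 / Real.log 2 * n * Real.log n
      = (n : ℝ) ^ 2 - 11 * Real.logb 2 n * n := by
        rw [← Real.log_div_log]
        ring
    _ ≤ (n : ℝ) ^ 2 - (7 + 4 * Nat.log 2 n) * n := by gcongr; linarith
    _ ≤ #(emptyTriples In) := by linarith

end NestedTriangles

end EmptyTriples

/-! ### Empty triangles of hereditarily convex drawings -/

section Count

open Finset

namespace GoodDrawing

variable {n : ℕ} {D : GoodDrawing n SpherePt} {Δ : Fin n → Fin n → Fin n → Set SpherePt}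
  {a b c : Fin n}

namespace IsHereditarilyConvex

lemma exists_nestedTriangles (hD : D.IsHereditarilyConvex Δ) :
    ∃ χ : Fin n → Fin n → Fin n → ℂ, NestedTriangles (D.inside Δ) χ := by
  obtain ⟨N, hN⟩ := D.exists_avoids
  choose! χ hχ_ne hχ using fun a b c => hD.exists_isJump hN (a := a) (b := b) (c := c)
  exact ⟨χ,
    { swap_left := fun a b c => congrArg (D.vtx ⁻¹' ·) (hD.openSide_swap_left a b c)
      swap_right := fun a b c => congrArg (D.vtx ⁻¹' ·) (hD.openSide_swap_right a b c)
      distinct := distinct_of_mem_inside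
      subset := hD.inside_subset_of_mem_inside
      sign_ne_neg := fun h => self_eq_neg.not.2 (hχ_ne _ _ _ h)
      sign_swap_left := fun h => hD.isJump_unique h.swap_left (hχ _ _ _ h.swap_left)
        (hD.isJump_swap_left (hχ _ _ _ h))
      sign_swap_right := fun h => hD.isJump_unique h.swap_right (hχ _ _ _ h.swap_right)
        (hD.isJump_swap_right hN h (hχ _ _ _ h))
      sign_eq := fun h hx => hD.isJump_eq_of_mem_inside hN h hx (hχ _ _ _ h)
        (hχ _ _ _ (distinct_of_mem_inside h hx)) }⟩

lemma mk_mem_emptyTriangles (hD : D.IsHereditarilyConvex Δ) (h : Distinct a b c)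
    (hempty : D.inside Δ a b c = ∅) : ({a, b, c}, D.openSide Δ a b c) ∈ D.emptyTriangles :=
  ⟨a, b, c, h.left, h.outer, h.right, rfl, hD.isOpenSide_openSide h,
    fun _ hx => (hempty.subset hx).elim⟩

lemma card_emptyTriples_le_ncard_emptyTriangles (hD : D.IsHereditarilyConvex Δ)
    (σ : Equiv.Perm (Fin n)) :
    #(emptyTriples (relabel σ (D.inside Δ))) ≤ D.emptyTriangles.ncard := by
  rw [← Set.ncard_coe_finset]
  refine Set.ncard_le_ncard_of_injOn
    (fun t => ({σ t.1.1, σ t.2, σ t.1.2}, D.openSide Δ (σ t.1.1) (σ t.2) (σ t.1.2)))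
    (fun t ht => ?_) ?_ D.finite_emptyTriangles
  · obtain ⟨hik, hkj, hempty⟩ := mem_emptyMiddles.1 (mem_sigma.1 ht).2
    refine hD.mk_mem_emptyTriangles ?_ (σ.surjective.preimage_injective hempty)
    exact (Distinct.of_lt hik hkj).map σ.injective
  · rintro ⟨⟨i, j⟩, k⟩ ht ⟨⟨i', j'⟩, k'⟩ ht' heq
    obtain ⟨hik, hkj, -⟩ := mem_emptyMiddles.1 (mem_sigma.1 ht).2
    obtain ⟨hik', hkj', -⟩ := mem_emptyMiddles.1 (mem_sigma.1 ht').2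
    have himage : ({i, k, j} : Finset (Fin n)).image σ =
        ({i', k', j'} : Finset (Fin n)).image σ := by
      simpa only [image_insert, Finset.image_singleton] using congrArg Prod.fst heq
    obtain ⟨rfl, rfl, rfl⟩ :=
      eq_of_insert_eq_of_lt hik hkj hik' hkj' (image_injective σ.injective himage)
    rfl

lemma intermediateValue_relabel (hD : D.IsHereditarilyConvex Δ) (π : Equiv.Perm (Fin n))
    (hIV : ∀ a b c : Fin n, a ≠ b → a ≠ c → b ≠ c → ∀ x, D.vtx x ∈ interior (Δ a b c) →
      (∃ y ∈ ({a, b, c} : Set (Fin n)), π y < π x) ∧ ∃ y ∈ ({a, b, c} : Set (Fin n)), π x < π y) :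
    IntermediateValue (relabel π.symm (D.inside Δ)) := by
  intro a b c h x hx
  have hσ := h.map π.symm.injective
  have hint : D.vtx (π.symm x) ∈ interior (Δ (π.symm a) (π.symm b) (π.symm c)) :=
    (hD.isOpen_openSide hσ).subset_interior_iff.2 sdiff_subset hx
  simpa [← Equiv.eq_symm_apply] using hIV _ _ _ hσ.left hσ.outer hσ.right _ hint

end IsHereditarilyConvex

end GoodDrawing

end Count

theorem emptyTriangles_of_hereditarily_convex_IV_general {n : ℕ} (hn : 2 ≤ n)
    {D : GoodDrawing n SpherePt} {Δ : Fin n → Fin n → Fin n → Set SpherePt}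
    (hD : D.IsHereditarilyConvex Δ) (π : Equiv.Perm (Fin n))
    (hIV : ∀ a b c : Fin n, a ≠ b → a ≠ c → b ≠ c → ∀ x, D.vtx x ∈ interior (Δ a b c) →
      (∃ y ∈ ({a, b, c} : Set (Fin n)), π y < π x) ∧ ∃ y ∈ ({a, b, c} : Set (Fin n)), π x < π y) :
    (n : ℝ) ^ 2 - 11 / Real.log 2 * n * Real.log n ≤ D.emptyTriangles.ncard := by
  obtain ⟨χ, hχ⟩ := hD.exists_nestedTriangles
  have hcount := (hχ.comap π.symm.injective).sq_card_sub_le_card_emptyTriples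
    (hD.intermediateValue_relabel π hIV) (by rwa [Fintype.card_fin])
  rw [Fintype.card_fin] at hcount
  exact hcount.trans (mod_cast hD.card_emptyTriples_le_ncard_emptyTriangles π.symm)

/-- A hereditarily convex intermediate value drawing of `K_n` has at least
`n² − c·n·log n` empty triangles. -/
theorem emptyTriangles_of_hereditarily_convex_IV :
    ∃ c : ℝ, 0 < c ∧ ∀ n : ℕ, 2 ≤ n → ∀ D : GoodDrawing n SpherePt,
      ∀ Δch : Fin n → Fin n → Fin n → Set SpherePt,
        (∀ a b c' : Fin n, a ≠ b → a ≠ c' → b ≠ c' →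
          IsClosedSide (D.tri a b c') (Δch a b c') ∧ D.ConvexDisc (Δch a b c')) →
        (∀ a b c' : Fin n, Δch a b c' = Δch b a c' ∧ Δch a b c' = Δch a c' b) →
        (∀ a b c' a' b' c'' : Fin n, a ≠ b → a ≠ c' → b ≠ c' →
          a' ≠ b' → a' ≠ c'' → b' ≠ c'' →
          D.tri a' b' c'' ⊆ Δch a b c' → Δch a' b' c'' ⊆ Δch a b c') →
      ∀ π : Equiv.Perm (Fin n),
        (∀ a b c' : Fin n, a ≠ b → a ≠ c' → b ≠ c' →
          ∀ Δ : Set SpherePt, IsClosedSide (D.tri a b c') Δ → D.ConvexDisc Δ →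
            ∀ x : Fin n, D.vtx x ∈ interior Δ →
              (∃ y ∈ ({a, b, c'} : Set (Fin n)), π y < π x) ∧
              (∃ y ∈ ({a, b, c'} : Set (Fin n)), π x < π y)) →
        (n : ℝ) ^ 2 - c * n * Real.log n ≤ (D.emptyTriangles.ncard : ℝ) := by
  refine ⟨11 / Real.log 2, by positivity, fun n hn D Δ hdisc hswap hher π hIV => ?_⟩
  have hD : D.IsHereditarilyConvex Δ :=
    { isClosedSide := fun h => (hdisc _ _ _ h.left h.outer h.right).1
      convexDisc := fun h => (hdisc _ _ _ h.left h.outer h.right).2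
      swap_left := fun a b c => (hswap a b c).1.symm
      swap_right := fun a b c => (hswap a b c).2.symm
      hereditary := fun h h' => hher _ _ _ _ _ _ h.left h.outer h.right h'.left h'.outer h'.right }
  exact emptyTriangles_of_hereditarily_convex_IV_general hn hD π fun a b c hab hac hbc =>
    hIV a b c hab hac hbc _ (hdisc a b c hab hac hbc).1 (hdisc a b c hab hac hbc).2

end
end
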